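/- Being an $\mathcal{S}$-domain is not a local property of the boundary: there exist $n \ge 2$ and a bounded domain $D \subseteq \mathbb{C}^n$ with smooth boundary such that $D$ is not an $\mathcal{S}$-domain, yet every boundary point $P \in \partial D$ has an open neighbourhood $U$ such that $D \cap U$ is an $\mathcal{S}$-domain. -/

import Mathlib

open MeasureTheory Real Filter Topology Metric

noncomputable section

/-- Encoding of the circle mean `(2π)⁻¹ ∫₀^{2π} u(a+e^{iθ}b) dθ` for an `EReal`-valued
(upper semicontinuous) function `u`, as the infimum of the means of the truncations
`max (u ·) (-m)`. -/
def circleMean {n : ℕ} (u : EuclideanSpace ℂ (Fin n) → EReal)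
    (a b : EuclideanSpace ℂ (Fin n)) : EReal :=
  ⨅ m : ℕ, (((2 * π)⁻¹ *
      ∫ θ in (0:ℝ)..(2 * π),
        (u (a + Complex.exp ((θ : ℂ) * Complex.I) • b) ⊔ ((-(m : ℝ) : ℝ) : EReal)).toReal : ℝ)
      : EReal)

/-- `u : Ω → [-∞, ∞)` is plurisubharmonic on an open `Ω ⊆ ℂⁿ`. -/
def IsPSHOn {n : ℕ} (Ω : Set (EuclideanSpace ℂ (Fin n)))
    (u : EuclideanSpace ℂ (Fin n) → EReal) : Prop :=
  UpperSemicontinuousOn u Ω ∧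
  (∀ z ∈ Ω, u z ≠ ⊤) ∧
  (∀ z ∈ Ω, ∃ w ∈ connectedComponentIn Ω z, u w ≠ ⊥) ∧
  ∀ a b : EuclideanSpace ℂ (Fin n),
    (∀ l : ℂ, ‖l‖ ≤ 1 → a + l • b ∈ Ω) → u a ≤ circleMean u a b

/-- `D` is an `𝒮`-domain: a domain on which every plurisubharmonic function is the
pointwise limit of a decreasing sequence of smooth plurisubharmonic functions. -/
def IsSDomain {n : ℕ} (D : Set (EuclideanSpace ℂ (Fin n))) : Prop :=
  IsOpen D ∧ IsConnected D ∧
  ∀ u : EuclideanSpace ℂ (Fin n) → EReal, IsPSHOn D u →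
    ∃ v : ℕ → EuclideanSpace ℂ (Fin n) → ℝ,
      (∀ k, ContDiffOn ℝ (⊤ : ℕ∞) (v k) D) ∧
      (∀ k, IsPSHOn D (fun z => ((v k z : ℝ) : EReal))) ∧
      (∀ k, ∀ z ∈ D, v (k+1) z ≤ v k z) ∧
      (∀ z ∈ D, Tendsto (fun k => ((v k z : ℝ) : EReal)) atTop (nhds (u z)))

/-- `D ⊆ ℂⁿ` has Lipschitz boundary: near each boundary point, after a rigid motion of
(the real) coordinates, the boundary is the graph of a Lipschitz function and the domain
is the region below the graph. -/
def HasLipschitzBoundary {n : ℕ} (D : Set (EuclideanSpace ℂ (Fin n))) : Prop :=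
  ∀ p ∈ frontier D,
    ∃ (φ : EuclideanSpace ℂ (Fin n) ≃ᵢ WithLp 2 (EuclideanSpace ℝ (Fin (2*n-1)) × ℝ))
      (F : EuclideanSpace ℝ (Fin (2*n-1)) → ℝ) (L : NNReal)
      (V : Set (WithLp 2 (EuclideanSpace ℝ (Fin (2*n-1)) × ℝ))),
      LipschitzWith L F ∧ IsOpen V ∧ φ p ∈ V ∧
      ∀ q ∈ V, (φ.symm q ∈ D ↔
        (WithLp.equiv 2 (EuclideanSpace ℝ (Fin (2*n-1)) × ℝ) q).2 <
          F (WithLp.equiv 2 (EuclideanSpace ℝ (Fin (2*n-1)) × ℝ) q).1)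

/-- `D ⊆ ℂⁿ` has smooth boundary: near each boundary point, after a rigid motion of (the
real) coordinates, the boundary is the graph of a smooth function and the domain is the
region below the graph. -/
def HasSmoothBoundary {n : ℕ} (D : Set (EuclideanSpace ℂ (Fin n))) : Prop :=
  ∀ p ∈ frontier D,
    ∃ (φ : EuclideanSpace ℂ (Fin n) ≃ᵢ WithLp 2 (EuclideanSpace ℝ (Fin (2*n-1)) × ℝ))
      (F : EuclideanSpace ℝ (Fin (2*n-1)) → ℝ)
      (V : Set (WithLp 2 (EuclideanSpace ℝ (Fin (2*n-1)) × ℝ))),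
      ContDiff ℝ (⊤ : ℕ∞) F ∧ IsOpen V ∧ φ p ∈ V ∧
      ∀ q ∈ V, (φ.symm q ∈ D ↔
        (WithLp.equiv 2 (EuclideanSpace ℝ (Fin (2*n-1)) × ℝ) q).2 <
          F (WithLp.equiv 2 (EuclideanSpace ℝ (Fin (2*n-1)) × ℝ) q).1)

/-! The counterexample is a domain in `ℂ³`, with coordinates `(z, b, a)`, whose fibre over `(z, a)`
is a disc about a point of the unit circle depending only on `|z|²`. For `1 ≤ |z|² ≤ 3` the disc
has radius at most one, so that it omits `b = 0` and carries a branch of `arg b`; as `|z|²` grows,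
the centre turns once and back again, and the branch rises above `3` and falls. For the other
`|z|² ≤ 4` the disc contains `b = 0`. Only for `a` near poles `a_j → 0` is the disc slightly
enlarged, so that it contains `b = 0` whenever `|z| ≤ 2`; there a weighted sum `F(a)` of the
functions `log (|a - a_j| / 10)` outweighs the argument. Hence the function
`u = max (0, F(a) + 1 + (arg b - 3))`, continued by `max (0, F(a) + 1)` to small `|z|` and by `0` to
large `|z|`, is plurisubharmonic. The discs `|z| ≤ 2`, `b = 0`, `a = a_j` converge to a disc whose
boundary lies in the domain and has `u = 0`, and whose centre lies in the domain and has
`u ≥ 1/2`. Continuous plurisubharmonic functions decreasing to `u` would, by compactness, become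
small on the limit circle, hence on nearby circles and, by the mean value inequality, at their
centres: a contradiction.

Near each boundary point the domain is almost a half space, so that its intersection with a
suitable ball is mapped into itself by a whole sector of complex homotheties about a point of the
domain. By the mean value inequality on small discs, some homothety in the sector loses little of
the value of a plurisubharmonic function at a given point. Composing with such homotheties,
mollifying and taking smooth maxima gives smooth majorants, and then a decreasing sequence. -/

open scoped ContDiff

/-- The space `ℂⁿ` with its Hermitian norm. -/
abbrev CSpace (n : ℕ) := EuclideanSpace ℂ (Fin n)

section Discs
variable {E : Type*} [NormedAddCommGroup E] [NormedSpace ℂ E]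

/-- The closed analytic disc `{a + l b : |l| ≤ 1}`, a point when `b = 0`. -/
def closedDisc (a b : E) : Set E := (fun l : ℂ => a + l • b) '' closedBall 0 1

/-- The mean of `f` over the boundary of `closedDisc a b`. -/
def discMean (f : E → ℝ) (a b : E) : ℝ := circleAverage (fun l => f (a + l • b)) 0 1

/-- The sub-mean value property of `f` on all closed discs inside `Ω`. It is plurisubharmonicity
of a real-valued function, without semicontinuity. -/
def IsSubMeanOn (Ω : Set E) (f : E → ℝ) : Prop :=
  ∀ ⦃a b : E⦄, closedDisc a b ⊆ Ω → f a ≤ discMean f a b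

variable {a b : E} {f g : E → ℝ} {Ω Ω' : Set E}

lemma closedDisc_subset_iff : closedDisc a b ⊆ Ω ↔ ∀ l : ℂ, ‖l‖ ≤ 1 → a + l • b ∈ Ω := by
  simp [closedDisc, Set.subset_def]

lemma add_smul_mem_closedDisc {l : ℂ} (hl : ‖l‖ ≤ 1) : a + l • b ∈ closedDisc a b :=
  ⟨l, mem_closedBall_zero_iff.2 hl, rfl⟩

lemma center_mem_closedDisc : a ∈ closedDisc a b := by
  simpa using add_smul_mem_closedDisc (a := a) (b := b) (l := 0) (by simp)

lemma isCompact_closedDisc : IsCompact (closedDisc a b) :=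
  (isCompact_closedBall 0 1).image (by fun_prop)

lemma closedDisc_subset_closedBall : closedDisc a b ⊆ closedBall a ‖b‖ := by
  refine closedDisc_subset_iff.2 fun l hl => ?_
  rw [mem_closedBall, dist_self_add_left, norm_smul]
  exact mul_le_of_le_one_left (norm_nonneg b) hl

lemma norm_le_one_of_mem_sphere {l : ℂ} (hl : l ∈ sphere (0 : ℂ) |1|) : ‖l‖ ≤ 1 := by
  simpa using (mem_sphere_zero_iff_norm.1 hl).le

lemma circleIntegrable_of_continuousOn (hf : ContinuousOn f Ω) (h : closedDisc a b ⊆ Ω) :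
    CircleIntegrable (fun l => f (a + l • b)) 0 1 :=
  ContinuousOn.circleIntegrable' <| hf.comp (by fun_prop) fun _ hl =>
    h (add_smul_mem_closedDisc (norm_le_one_of_mem_sphere hl))

lemma circleIntegrable_of_upperSemicontinuousOn (hf : UpperSemicontinuousOn f Ω) {m : ℝ}
    (hm : ∀ z ∈ Ω, m ≤ f z) (h : closedDisc a b ⊆ Ω) :
    CircleIntegrable (fun l => f (a + l • b)) 0 1 := by
  obtain ⟨M, hM⟩ := (hf.mono h).bddAbove_of_isCompact isCompact_closedDisc
  have hmem (θ : ℝ) : a + circleMap 0 1 θ • b ∈ closedDisc a b :=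
    add_smul_mem_closedDisc (by simp)
  have husc : UpperSemicontinuous fun θ : ℝ => f (a + circleMap 0 1 θ • b) :=
    upperSemicontinuousOn_univ_iff.1 <|
      hf.comp (g := fun θ : ℝ => a + circleMap 0 1 θ • b) (by fun_prop) fun θ _ => h (hmem θ)
  refine (intervalIntegrable_const (c := max |m| |M|)).mono_fun
    husc.measurable.aestronglyMeasurable (Eventually.of_forall fun θ => ?_)
  change ‖f (a + circleMap 0 1 θ • b)‖ ≤ ‖max |m| |M|‖
  rw [norm_eq_abs, norm_eq_abs, abs_of_nonneg (le_max_of_le_left (abs_nonneg m))]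
  exact abs_le_max_abs_abs (hm _ (h (hmem θ))) (hM ⟨_, hmem θ, rfl⟩)

lemma discMean_mono (hf : CircleIntegrable (fun l => f (a + l • b)) 0 1)
    (hg : CircleIntegrable (fun l => g (a + l • b)) 0 1) (h : ∀ z ∈ closedDisc a b, f z ≤ g z) :
    discMean f a b ≤ discMean g a b :=
  circleAverage_mono hf hg fun _ hl => h _ (add_smul_mem_closedDisc (norm_le_one_of_mem_sphere hl))

lemma discMean_congr (h : Set.EqOn f g (closedDisc a b)) : discMean f a b = discMean g a b :=
  circleAverage_congr_sphere fun _ hl =>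
    h (add_smul_mem_closedDisc (norm_le_one_of_mem_sphere hl))

lemma discMean_const (c : ℝ) : discMean (fun _ : E => c) a b = c := circleAverage_const c 0 1

lemma discMean_add (hf : CircleIntegrable (fun l => f (a + l • b)) 0 1)
    (hg : CircleIntegrable (fun l => g (a + l • b)) 0 1) :
    discMean (fun z => f z + g z) a b = discMean f a b + discMean g a b :=
  circleAverage_fun_add hf hg

lemma discMean_const_mul (c : ℝ) : discMean (fun z => c * f z) a b = c * discMean f a b :=
  circleAverage_fun_smul (a := c) (f := fun l => f (a + l • b))

lemma isSubMeanOn_const (c : ℝ) : IsSubMeanOn Ω fun _ => c := fun _ _ _ => (discMean_const c).ge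

lemma IsSubMeanOn.mono (hf : IsSubMeanOn Ω f) (h : Ω' ⊆ Ω) : IsSubMeanOn Ω' f :=
  fun _ _ hab => hf (hab.trans h)

lemma IsSubMeanOn.congr (hf : IsSubMeanOn Ω f) (h : Set.EqOn f g Ω) : IsSubMeanOn Ω g := by
  intro a b hab
  rw [← h (hab center_mem_closedDisc), ← discMean_congr (h.mono hab)]
  exact hf hab

lemma IsSubMeanOn.comp_add_smul_sub (hf : IsSubMeanOn Ω f) (q : E) (l : ℂ)
    (h : Set.MapsTo (fun z => z + l • (q - z)) Ω' Ω) :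
    IsSubMeanOn Ω' fun z => f (z + l • (q - z)) := by
  intro a b hab
  have haff (μ : ℂ) : a + μ • b + l • (q - (a + μ • b)) =
      (a + l • (q - a)) + μ • ((1 - l) • b) := by module
  have hsub : closedDisc (a + l • (q - a)) ((1 - l) • b) ⊆ Ω :=
    closedDisc_subset_iff.2 fun μ hμ => haff μ ▸ h (hab (add_smul_mem_closedDisc hμ))
  simpa only [discMean, haff] using hf hsub

end Discs

section Truncation
variable {n : ℕ} {Ω : Set (CSpace n)} {u : CSpace n → EReal} {m k : ℕ} {z : CSpace n}

lemma circleMean_coe_eq (u : CSpace n → EReal) (a b : CSpace n) : circleMean u a b =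
    ⨅ m : ℕ, ((discMean (fun z => (u z ⊔ ((-(m : ℝ) : ℝ) : EReal)).toReal) a b : ℝ) : EReal) := by
  simp only [circleMean, discMean, circleAverage, circleMap, Complex.ofReal_one, one_mul, zero_add,
    smul_eq_mul]

lemma IsSubMeanOn.isPSHOn_of_circleIntegrable {f : CSpace n → ℝ} (hf : IsSubMeanOn Ω f)
    (husc : UpperSemicontinuousOn f Ω)
    (hint : ∀ a b, closedDisc a b ⊆ Ω → CircleIntegrable (fun l => f (a + l • b)) 0 1) :
    IsPSHOn Ω fun z => (f z : EReal) := by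
  refine ⟨continuous_coe_real_ereal.comp_upperSemicontinuousOn husc
      EReal.coe_strictMono.monotone, fun _ _ => EReal.coe_ne_top _, fun z hz =>
    ⟨z, mem_connectedComponentIn hz, EReal.coe_ne_bot _⟩, fun a b h => ?_⟩
  rw [← closedDisc_subset_iff] at h
  rw [circleMean_coe_eq]
  refine le_iInf fun m => EReal.coe_le_coe_iff.2 ((hf h).trans ?_)
  simp only [← EReal.coe_strictMono.monotone.map_max, EReal.toReal_coe]
  exact discMean_mono (hint a b h) (circleIntegrable_of_upperSemicontinuousOn
    (husc.sup upperSemicontinuousOn_const) (fun z _ => le_max_right _ _) h)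
    fun z _ => le_max_left _ _

lemma IsSubMeanOn.isPSHOn {f : CSpace n → ℝ} (hf : IsSubMeanOn Ω f) (hc : ContinuousOn f Ω) :
    IsPSHOn Ω fun z => (f z : EReal) :=
  hf.isPSHOn_of_circleIntegrable hc.upperSemicontinuousOn fun _ _ =>
    circleIntegrable_of_continuousOn hc

/-- The truncation `max u (-m)` of an extended-real function, as a real-valued function. -/
def trunc (u : CSpace n → EReal) (m : ℕ) (z : CSpace n) : ℝ :=
  (u z ⊔ ((-(m : ℝ) : ℝ) : EReal)).toReal

lemma coe_trunc (hz : u z ≠ ⊤) : (trunc u m z : EReal) = u z ⊔ ((-(m : ℝ) : ℝ) : EReal) :=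
  EReal.coe_toReal (max_lt hz.lt_top (EReal.coe_lt_top _)).ne
    ((EReal.bot_lt_coe _).trans_le (le_max_right _ _)).ne'

lemma le_trunc (hz : u z ≠ ⊤) : u z ≤ trunc u m z := coe_trunc hz ▸ le_max_left _ _

lemma neg_le_trunc (hz : u z ≠ ⊤) : -(m : ℝ) ≤ trunc u m z :=
  EReal.coe_le_coe_iff.1 (coe_trunc hz ▸ le_max_right _ _)

lemma trunc_le {c : ℝ} (hz : u z ≠ ⊤) (huc : u z ≤ c) (hmc : -(m : ℝ) ≤ c) : trunc u m z ≤ c :=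
  EReal.coe_le_coe_iff.1 (coe_trunc hz ▸ max_le huc (EReal.coe_le_coe_iff.2 hmc))

lemma trunc_lt {c : ℝ} (hz : u z ≠ ⊤) (huc : u z < c) (hmc : -(m : ℝ) < c) : trunc u m z < c :=
  EReal.coe_lt_coe_iff.1 (coe_trunc hz ▸ max_lt huc (EReal.coe_lt_coe_iff.2 hmc))

lemma trunc_anti (h : m ≤ k) (hz : u z ≠ ⊤) : trunc u k z ≤ trunc u m z :=
  trunc_le hz (le_trunc hz) ((neg_le_neg (Nat.cast_le.2 h)).trans (neg_le_trunc hz))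

lemma IsPSHOn.upperSemicontinuousOn_trunc (hu : IsPSHOn Ω u) (m : ℕ) :
    UpperSemicontinuousOn (trunc u m) Ω := by
  intro z hz c hc
  have huc : u z < c := (le_trunc (hu.2.1 z hz)).trans_lt (EReal.coe_lt_coe_iff.2 hc)
  have hmc : -(m : ℝ) < c := (neg_le_trunc (hu.2.1 z hz)).trans_lt hc
  filter_upwards [hu.1 z hz _ huc, self_mem_nhdsWithin] with y hy hyΩ
  exact trunc_lt (hu.2.1 y hyΩ) hy hmc

lemma IsPSHOn.isSubMeanOn_trunc (hu : IsPSHOn Ω u) (m : ℕ) : IsSubMeanOn Ω (trunc u m) := by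
  intro a b h
  have hbelow : ∀ z ∈ Ω, -(m : ℝ) ≤ trunc u m z := fun z hz => neg_le_trunc (hu.2.1 z hz)
  refine trunc_le (hu.2.1 a (h center_mem_closedDisc)) ?_ ?_
  · refine (hu.2.2.2 a b (closedDisc_subset_iff.1 h)).trans ?_
    rw [circleMean_coe_eq]
    exact iInf_le _ m
  · rw [← discMean_const (E := CSpace n) (a := a) (b := b) (-(m : ℝ))]
    exact discMean_mono (circleIntegrable_const _ _ _) (circleIntegrable_of_upperSemicontinuousOn
      (hu.upperSemicontinuousOn_trunc m) hbelow h) fun z hz => hbelow z (h hz)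

end Truncation

section SmoothMax

/-- A smooth convex approximation of the positive part `max t 0`, within `η` of it. -/
def smoothPos (η t : ℝ) : ℝ := ∫ s in (-η)..t, smoothTransition ((s + η) / η)

variable {η s t x y c : ℝ}

lemma continuous_smoothPos_density (η : ℝ) : Continuous fun s => smoothTransition ((s + η) / η) :=
  smoothTransition.continuous.comp (by fun_prop)

lemma intervalIntegrable_smoothPos_density (η s t : ℝ) :
    IntervalIntegrable (fun s => smoothTransition ((s + η) / η)) volume s t :=
  (continuous_smoothPos_density η).intervalIntegrable s t

lemma smoothPos_sub (η s t : ℝ) :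
    smoothPos η t - smoothPos η s = ∫ r in s..t, smoothTransition ((r + η) / η) :=
  intervalIntegral.integral_interval_sub_left (intervalIntegrable_smoothPos_density _ _ _)
    (intervalIntegrable_smoothPos_density _ _ _)

lemma contDiff_smoothPos (η : ℝ) : ContDiff ℝ ∞ (smoothPos η) := by
  have hderiv (t : ℝ) : HasDerivAt (smoothPos η) (smoothTransition ((t + η) / η)) t :=
    intervalIntegral.integral_hasDerivAt_right (intervalIntegrable_smoothPos_density _ _ _)
      ((continuous_smoothPos_density η).stronglyMeasurableAtFilter _ _)
      (continuous_smoothPos_density η).continuousAt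
  refine contDiff_infty_iff_deriv.2 ⟨fun t => (hderiv t).differentiableAt, ?_⟩
  rw [funext fun t => (hderiv t).deriv]
  exact smoothTransition.contDiff.comp ((contDiff_id.add contDiff_const).div_const η)

lemma smoothPos_mono (η : ℝ) : Monotone (smoothPos η) := fun s t hst => by
  rw [← sub_nonneg, smoothPos_sub]
  exact intervalIntegral.integral_nonneg hst fun _ _ => smoothTransition.nonneg _

lemma smoothPos_sub_le (η : ℝ) (h : s ≤ t) : smoothPos η t - smoothPos η s ≤ t - s := by
  rw [smoothPos_sub]
  simpa using intervalIntegral.integral_mono_on h (intervalIntegrable_smoothPos_density η s t)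
    intervalIntegrable_const fun _ _ => smoothTransition.le_one _

lemma smoothPos_eq_zero (hη : 0 < η) (h : t ≤ -η) : smoothPos η t = 0 := by
  rw [smoothPos, intervalIntegral.integral_congr (g := fun _ => 0),
    intervalIntegral.integral_zero]
  intro s hs
  rw [Set.uIcc_of_ge h] at hs
  exact smoothTransition.zero_of_nonpos (div_nonpos_of_nonpos_of_nonneg (by linarith [hs.2]) hη.le)

lemma smoothPos_nonneg (hη : 0 < η) (t : ℝ) : 0 ≤ smoothPos η t := by
  rcases le_total t (-η) with h | h
  · exact (smoothPos_eq_zero hη h).ge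
  · exact (smoothPos_eq_zero hη le_rfl).ge.trans (smoothPos_mono η h)

lemma smoothPos_eq_add (hη : 0 < η) (ht : 0 ≤ t) : smoothPos η t = smoothPos η 0 + t := by
  rw [← sub_eq_iff_eq_add', smoothPos_sub, intervalIntegral.integral_congr (g := fun _ => 1)]
  · simp
  intro s hs
  rw [Set.uIcc_of_le ht] at hs
  exact smoothTransition.one_of_one_le ((one_le_div hη).2 (by linarith [hs.1]))

lemma le_smoothPos (hη : 0 < η) (t : ℝ) : t ≤ smoothPos η t := by
  rcases le_total t 0 with h | h
  · exact h.trans (smoothPos_nonneg hη t)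
  · linarith [smoothPos_eq_add hη h, smoothPos_nonneg hη 0]

lemma smoothPos_zero_le (hη : 0 < η) : smoothPos η 0 ≤ η := by
  have h := smoothPos_sub_le η (neg_nonpos.2 hη.le)
  rw [smoothPos_eq_zero hη le_rfl] at h
  linarith

lemma exists_smoothPos_supporting_line (hη : 0 ≤ η) (s : ℝ) :
    ∃ r, 0 ≤ r ∧ r ≤ 1 ∧ ∀ t, smoothPos η s + r * (t - s) ≤ smoothPos η t := by
  have hmono : Monotone fun r : ℝ => smoothTransition ((r + η) / η) := fun _ _ h =>
    smoothTransition.monotone (by gcongr)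
  refine ⟨_, smoothTransition.nonneg ((s + η) / η), smoothTransition.le_one _, fun t => ?_⟩
  rcases le_total s t with h | h
  · have := intervalIntegral.integral_mono_on h intervalIntegrable_const
      (intervalIntegrable_smoothPos_density η s t) fun r hr => hmono hr.1
    rw [← smoothPos_sub, intervalIntegral.integral_const, smul_eq_mul] at this
    linarith
  · have := intervalIntegral.integral_mono_on h (intervalIntegrable_smoothPos_density η t s)
      intervalIntegrable_const fun r hr => hmono hr.2
    rw [← smoothPos_sub, intervalIntegral.integral_const, smul_eq_mul] at this
    linarith

/-- A smooth convex approximation of `max x y`, exceeding it by at most `η`. -/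
def smoothMax (η x y : ℝ) : ℝ := x + smoothPos η (y - x)

lemma le_smoothMax_left (hη : 0 < η) (x y : ℝ) : x ≤ smoothMax η x y :=
  le_add_of_nonneg_right (smoothPos_nonneg hη _)

lemma le_smoothMax_right (hη : 0 < η) (x y : ℝ) : y ≤ smoothMax η x y := by
  unfold smoothMax
  linarith [le_smoothPos hη (y - x)]

lemma smoothMax_le (hη : 0 < η) (hx : x ≤ c) (hy : y ≤ c) : smoothMax η x y ≤ c + η := by
  have h := smoothPos_mono η (le_max_left (y - x) 0)
  rw [smoothPos_eq_add hη (le_max_right _ _)] at h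
  unfold smoothMax
  linarith [smoothPos_zero_le hη, max_le (sub_le_sub_right hy x) (sub_nonneg.2 hx)]

lemma smoothMax_eq_left (hη : 0 < η) (h : y + η ≤ x) : smoothMax η x y = x := by
  rw [smoothMax, smoothPos_eq_zero hη (by linarith), add_zero]

end SmoothMax

section SmoothPSH
variable {E : Type*} [NormedAddCommGroup E] [NormedSpace ℂ E] [NormedSpace ℝ E]
  {Ω : Set E} {f g : E → ℝ} {η : ℝ}

/-- Smooth plurisubharmonic functions on an open set `Ω`. -/
def IsSmoothPSHOn (Ω : Set E) (f : E → ℝ) : Prop := ContDiffOn ℝ ∞ f Ω ∧ IsSubMeanOn Ω f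

lemma IsSmoothPSHOn.circleIntegrable {a b : E} (hf : IsSmoothPSHOn Ω f) (h : closedDisc a b ⊆ Ω) :
    CircleIntegrable (fun l => f (a + l • b)) 0 1 :=
  circleIntegrable_of_continuousOn hf.1.continuousOn h

lemma IsSmoothPSHOn.add_const (hf : IsSmoothPSHOn Ω f) (c : ℝ) :
    IsSmoothPSHOn Ω fun z => f z + c := by
  refine ⟨hf.1.add contDiffOn_const, fun a b h => ?_⟩
  rw [discMean_add (hf.circleIntegrable h) (circleIntegrable_const c 0 1), discMean_const]
  exact add_le_add_left (hf.2 h) c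

-- A supporting line of `smoothPos η` at `g a - f a` is an affine minorant whose mean is computable.
lemma IsSmoothPSHOn.comp_smoothMax (hη : 0 < η) (hf : IsSmoothPSHOn Ω f) (hg : IsSmoothPSHOn Ω g) :
    IsSmoothPSHOn Ω fun z => smoothMax η (f z) (g z) := by
  have hsmooth : ContDiffOn ℝ ∞ (fun z => smoothMax η (f z) (g z)) Ω :=
    hf.1.add ((contDiff_smoothPos η).comp_contDiffOn (hg.1.sub hf.1))
  refine ⟨hsmooth, fun a b h => ?_⟩
  obtain ⟨r, hr0, hr1, hr⟩ := exists_smoothPos_supporting_line hη.le (g a - f a)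
  set c := smoothPos η (g a - f a) - r * (g a - f a) with hc
  have hF : CircleIntegrable (fun l => (1 - r) * f (a + l • b)) 0 1 :=
    (hf.circleIntegrable h).const_smul
  have hG : CircleIntegrable (fun l => r * g (a + l • b)) 0 1 :=
    (hg.circleIntegrable h).const_smul
  have hC : CircleIntegrable (fun _ => c) 0 1 := circleIntegrable_const c 0 1
  have hmean : discMean (fun z => (1 - r) * f z + r * g z + c) a b =
      (1 - r) * discMean f a b + r * discMean g a b + c := by
    rw [discMean_add (f := fun z => (1 - r) * f z + r * g z) (hF.add hG) hC,
      discMean_add (f := fun z => (1 - r) * f z) (g := fun z => r * g z) hF hG,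
      discMean_const_mul, discMean_const_mul, discMean_const]
  calc smoothMax η (f a) (g a) = (1 - r) * f a + r * g a + c := by
        rw [smoothMax, hc]; ring
    _ ≤ (1 - r) * discMean f a b + r * discMean g a b + c := by
        gcongr
        exacts [hf.2 h, hg.2 h]
    _ ≤ discMean (fun z => smoothMax η (f z) (g z)) a b := by
        rw [← hmean]
        refine discMean_mono ((hF.add hG).add hC)
          (circleIntegrable_of_continuousOn hsmooth.continuousOn h) fun z _ => ?_
        have := hr (g z - f z)
        rw [smoothMax, hc]
        linarith

lemma exists_isSmoothPSHOn_finset_max {ι : Type*} {t : Finset ι} (ht : t.Nonempty) {s : ι → E → ℝ}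
    (hs : ∀ i ∈ t, IsSmoothPSHOn Ω (s i)) (hη : 0 < η) :
    ∃ w, IsSmoothPSHOn Ω w ∧ (∀ i ∈ t, ∀ z, s i z ≤ w z) ∧
      ∀ z c, (∀ i ∈ t, s i z ≤ c) → w z ≤ c + η := by
  induction ht using Finset.Nonempty.cons_induction generalizing η with
  | singleton i =>
    exact ⟨s i, hs i (Finset.mem_singleton_self i), by simp, fun z c h =>
      (h i (Finset.mem_singleton_self i)).trans (le_add_of_nonneg_right hη.le)⟩
  | cons i t hi _ ih =>
    obtain ⟨w, hw, hsw, hwc⟩ := ih (fun j hj => hs j (Finset.mem_cons_of_mem hj)) (half_pos hη)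
    refine ⟨_, (hs i (Finset.mem_cons_self i t)).comp_smoothMax (half_pos hη) hw, ?_, ?_⟩
    · intro j hj z
      rcases Finset.mem_cons.1 hj with rfl | hj
      · exact le_smoothMax_left (half_pos hη) _ _
      · exact (hsw j hj z).trans (le_smoothMax_right (half_pos hη) _ _)
    · intro z c h
      have hi := (h i (Finset.mem_cons_self i t)).trans
        (le_add_of_nonneg_right (half_pos hη).le)
      have hw := hwc z c fun j hj => h j (Finset.mem_cons_of_mem hj)
      linarith [smoothMax_le (half_pos hη) hi hw]

end SmoothPSH

section Mollification
variable {n : ℕ} {ε : ℝ}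

lemma measurePreserving_smul_of_norm_eq_one {c : ℂ} (hc : ‖c‖ = 1) :
    MeasurePreserving fun y : CSpace n => c • y := by
  let rotation : CSpace n ≃ₗᵢ[ℝ] CSpace n :=
    { (LinearEquiv.smulOfNeZero ℂ (CSpace n) c
        (norm_ne_zero_iff.1 (hc ▸ one_ne_zero))).restrictScalars ℝ with
      norm_map' := fun y => (norm_smul c y).trans (by rw [hc, one_mul]) }
  exact rotation.measurePreserving

/-- A smooth radial bump function supported in the closed ball of radius `ε`, not normalised. -/
def bumpKernel (ε : ℝ) (y : CSpace n) : ℝ := expNegInvGlue (ε ^ 2 - ‖y‖ ^ 2)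

lemma contDiff_bumpKernel (ε : ℝ) : ContDiff ℝ ∞ (bumpKernel ε : CSpace n → ℝ) :=
  expNegInvGlue.contDiff.comp (contDiff_const.sub (contDiff_norm_sq ℝ))

lemma bumpKernel_nonneg (ε : ℝ) (y : CSpace n) : 0 ≤ bumpKernel ε y := expNegInvGlue.nonneg _

lemma bumpKernel_eq_zero (hε : 0 < ε) {y : CSpace n} (hy : ε ≤ ‖y‖) : bumpKernel ε y = 0 :=
  expNegInvGlue.zero_of_nonpos (sub_nonpos.2 (by gcongr))

lemma bumpKernel_smul {c : ℂ} (hc : ‖c‖ = 1) (y : CSpace n) :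
    bumpKernel ε (c • y) = bumpKernel ε y := by
  rw [bumpKernel, norm_smul, hc, one_mul, bumpKernel]

lemma hasCompactSupport_bumpKernel (hε : 0 < ε) :
    HasCompactSupport (bumpKernel ε : CSpace n → ℝ) :=
  HasCompactSupport.intro (isCompact_closedBall 0 ε) fun _ hy =>
    bumpKernel_eq_zero hε (not_le.1 (mem_closedBall_zero_iff.not.1 hy)).le

lemma integrable_bumpKernel (hε : 0 < ε) : Integrable (bumpKernel ε : CSpace n → ℝ) :=
  (contDiff_bumpKernel ε).continuous.integrable_of_hasCompactSupport
    (hasCompactSupport_bumpKernel hε)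

lemma integral_bumpKernel_pos (hε : 0 < ε) : 0 < ∫ y : CSpace n, bumpKernel ε y := by
  refine (contDiff_bumpKernel ε).continuous.integral_pos_of_hasCompactSupport_nonneg_nonzero
    (hasCompactSupport_bumpKernel hε) (bumpKernel_nonneg ε) (x := 0) ?_
  exact (expNegInvGlue.pos_of_pos (by simpa using pow_pos hε 2)).ne'

/-- The probability measure on `ℂⁿ` with density proportional to `bumpKernel ε`. -/
def bumpMeasure (n : ℕ) (ε : ℝ) : Measure (CSpace n) :=
  volume.withDensity fun y => ENNReal.ofReal ((∫ x : CSpace n, bumpKernel ε x)⁻¹ * bumpKernel ε y)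

lemma measurable_bumpMeasure_density (ε : ℝ) : Measurable fun y : CSpace n =>
    ENNReal.ofReal ((∫ x : CSpace n, bumpKernel ε x)⁻¹ * bumpKernel ε y) :=
  ((contDiff_bumpKernel ε).continuous.measurable.const_mul _).ennreal_ofReal

lemma isProbabilityMeasure_bumpMeasure (hε : 0 < ε) : IsProbabilityMeasure (bumpMeasure n ε) := by
  refine ⟨?_⟩
  have hpos := integral_bumpKernel_pos (n := n) hε
  rw [bumpMeasure, withDensity_apply _ MeasurableSet.univ, Measure.restrict_univ,
    ← ofReal_integral_eq_lintegral_ofReal ((integrable_bumpKernel hε).const_mul _)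
      (Eventually.of_forall fun y => mul_nonneg (inv_nonneg.2 hpos.le) (bumpKernel_nonneg ε y)),
    integral_const_mul, inv_mul_cancel₀ hpos.ne', ENNReal.ofReal_one]

lemma ae_bumpMeasure_norm_lt (hε : 0 < ε) : ∀ᵐ y ∂bumpMeasure n ε, ‖y‖ < ε := by
  rw [bumpMeasure, ae_withDensity_iff (measurable_bumpMeasure_density ε)]
  refine Eventually.of_forall fun y hy => lt_of_not_ge fun hle => hy ?_
  rw [bumpKernel_eq_zero hε hle, mul_zero, ENNReal.ofReal_zero]

lemma integral_bumpMeasure_eq (ε : ℝ) (g : CSpace n → ℝ) : ∫ y, g y ∂bumpMeasure n ε =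
    (∫ x : CSpace n, bumpKernel ε x)⁻¹ * ∫ y, bumpKernel ε y * g y := by
  rw [bumpMeasure, integral_withDensity_eq_integral_toReal_smul (measurable_bumpMeasure_density ε)
    (Eventually.of_forall fun _ => ENNReal.ofReal_lt_top), ← integral_const_mul]
  refine integral_congr_ae (Eventually.of_forall fun y => ?_)
  have hnonneg : 0 ≤ (∫ x : CSpace n, bumpKernel ε x)⁻¹ * bumpKernel ε y :=
    mul_nonneg (inv_nonneg.2 (integral_nonneg (bumpKernel_nonneg ε))) (bumpKernel_nonneg ε y)
  simp only [ENNReal.toReal_ofReal hnonneg, smul_eq_mul, mul_assoc]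

lemma integral_bumpMeasure_smul {c : ℂ} (hc : ‖c‖ = 1) (g : CSpace n → ℝ) :
    ∫ y, g (c • y) ∂bumpMeasure n ε = ∫ y, g y ∂bumpMeasure n ε := by
  have hemb : MeasurableEmbedding fun y : CSpace n => c • y :=
    measurableEmbedding_const_smul₀ (norm_ne_zero_iff.1 (hc ▸ one_ne_zero))
  rw [integral_bumpMeasure_eq, integral_bumpMeasure_eq,
    ← (measurePreserving_smul_of_norm_eq_one hc).integral_comp hemb fun y => bumpKernel ε y * g y]
  simp only [bumpKernel_smul hc]

lemma circleAverage_integral_comm {α : Type*} [MeasurableSpace α] {μ : Measure α}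
    [IsFiniteMeasure μ] {G : ℂ → α → ℝ} (hG : Measurable (Function.uncurry G)) {B : ℝ}
    (hB : ∀ l y, |G l y| ≤ B) (c : ℂ) (R : ℝ) :
    circleAverage (fun l => ∫ y, G l y ∂μ) c R = ∫ y, circleAverage (fun l => G l y) c R ∂μ := by
  simp only [circleAverage, intervalIntegral.integral_of_le two_pi_pos.le]
  rw [integral_smul, integral_integral_swap]
  refine Integrable.of_bound (C := B) (Measurable.aestronglyMeasurable ?_)
    (Eventually.of_forall fun p => hB _ _)
  exact hG.comp (((continuous_circleMap c R).measurable.comp measurable_fst).prodMk measurable_snd)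

/-- The mollification of `f` by a radial kernel supported in the closed ball of radius `ε`. -/
def mollify (ε : ℝ) (f : CSpace n → ℝ) (z : CSpace n) : ℝ := ∫ y, f (z - y) ∂bumpMeasure n ε

variable {f : CSpace n → ℝ} {B : ℝ}

lemma contDiff_mollify (hε : 0 < ε) (hf : Measurable f) (hB : ∀ z, |f z| ≤ B) :
    ContDiff ℝ ∞ (mollify ε f) := by
  have hloc : LocallyIntegrable f :=
    (locallyIntegrable_const B).mono hf.aestronglyMeasurable
      (Eventually.of_forall fun z => (hB z).trans (le_abs_self B))
  have hconv := (hasCompactSupport_bumpKernel hε).contDiff_convolution_left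
    (ContinuousLinearMap.lsmul ℝ ℝ) (contDiff_bumpKernel ε) hloc
  have heq : mollify ε f = fun z =>
      (∫ x : CSpace n, bumpKernel ε x)⁻¹ * ∫ y, bumpKernel ε y * f (z - y) :=
    funext fun z => integral_bumpMeasure_eq ε _
  exact heq ▸ contDiff_const.mul hconv

lemma integrable_bumpMeasure_of_bounded (hε : 0 < ε) {g : CSpace n → ℝ} (hg : Measurable g)
    (hB : ∀ y, |g y| ≤ B) : Integrable g (bumpMeasure n ε) :=
  have := isProbabilityMeasure_bumpMeasure (n := n) hε
  Integrable.of_bound hg.aestronglyMeasurable B (Eventually.of_forall hB)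

lemma mollify_le (hε : 0 < ε) (hf : Measurable f) (hB : ∀ z, |f z| ≤ B) {z : CSpace n} {c : ℝ}
    (h : ∀ y, ‖y‖ < ε → f (z - y) ≤ c) : mollify ε f z ≤ c := by
  have := isProbabilityMeasure_bumpMeasure (n := n) hε
  calc mollify ε f z ≤ ∫ _, c ∂bumpMeasure n ε :=
        integral_mono_ae (integrable_bumpMeasure_of_bounded hε (hf.comp (by fun_prop))
          fun _ => hB _) (integrable_const c) ((ae_bumpMeasure_norm_lt hε).mono h)
    _ = c := by simp

lemma measurable_discMean {F G : CSpace n → CSpace n} (hf : Measurable f) (hF : Measurable F)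
    (hG : Measurable G) : Measurable fun y => discMean f (F y) (G y) := by
  simp only [discMean, circleAverage, intervalIntegral.integral_of_le two_pi_pos.le, smul_eq_mul]
  have hmeas : Measurable (Function.uncurry fun (y : CSpace n) (θ : ℝ) =>
      f (F y + circleMap 0 1 θ • G y)) := hf.comp <|
    (hF.comp measurable_fst).add <|
      ((continuous_circleMap 0 1).measurable.comp measurable_snd).smul (hG.comp measurable_fst)
  exact (hmeas.stronglyMeasurable.integral_prod_right.measurable).const_mul _

lemma abs_discMean_le (hB : ∀ z, |f z| ≤ B) (a b : CSpace n) : |discMean f a b| ≤ B := by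
  have h := intervalIntegral.norm_integral_le_of_norm_le_const (a := 0) (b := 2 * π)
    (f := fun θ => f (a + circleMap 0 1 θ • b)) fun _ _ => hB _
  rw [sub_zero, abs_of_pos two_pi_pos, norm_eq_abs] at h
  rw [discMean, circleAverage, smul_eq_mul, abs_mul, abs_of_pos (inv_pos.2 two_pi_pos)]
  exact (inv_mul_le_iff₀ two_pi_pos).2 (h.trans_eq (mul_comm _ _))

lemma discMean_mollify (hε : 0 < ε) (hf : Measurable f) (hB : ∀ z, |f z| ≤ B) (a b : CSpace n) :
    discMean (mollify ε f) a b = ∫ y, discMean f (a - y) b ∂bumpMeasure n ε := by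
  have := isProbabilityMeasure_bumpMeasure (n := n) hε
  have hG : Measurable (Function.uncurry fun (l : ℂ) (y : CSpace n) => f (a + l • b - y)) :=
    hf.comp (by fun_prop)
  have hcomm := circleAverage_integral_comm (μ := bumpMeasure n ε) hG (fun _ _ => hB _) 0 1
  simpa only [discMean, mollify, add_sub_right_comm] using hcomm

lemma mollify_le_discMean (hε : 0 < ε) (hf : Measurable f) (hB : ∀ z, |f z| ≤ B) {a b : CSpace n}
    (h : ∀ y, ‖y‖ < ε → f (a - y) ≤ discMean f (a - y) b) :
    mollify ε f a ≤ discMean (mollify ε f) a b := by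
  rw [discMean_mollify hε hf hB]
  exact integral_mono_ae
    (integrable_bumpMeasure_of_bounded hε (hf.comp (by fun_prop)) fun _ => hB _)
    (integrable_bumpMeasure_of_bounded hε
      (measurable_discMean hf (by fun_prop) measurable_const) fun _ => abs_discMean_le hB _ _)
    ((ae_bumpMeasure_norm_lt hε).mono h)

lemma mollify_eq_integral_discMean (hε : 0 < ε) (hf : Measurable f) (hB : ∀ z, |f z| ≤ B)
    (z : CSpace n) : mollify ε f z = ∫ y, discMean f z y ∂bumpMeasure n ε := by
  have := isProbabilityMeasure_bumpMeasure (n := n) hε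
  have hG : Measurable (Function.uncurry fun (l : ℂ) (y : CSpace n) => f (z + l • y)) :=
    hf.comp (by fun_prop)
  have hrot : Set.EqOn (fun l : ℂ => ∫ y, f (z + l • y) ∂bumpMeasure n ε)
      (fun _ => mollify ε f z) (sphere 0 |1|) := fun l hl => by
    have hl : ‖-l‖ = 1 := by simpa using hl
    have hsub (y : CSpace n) : z + l • y = z - (-l) • y := by module
    simpa only [mollify, hsub] using integral_bumpMeasure_smul (ε := ε) hl fun y => f (z - y)
  simp only [discMean]
  rw [← circleAverage_integral_comm hG fun _ _ => hB _, circleAverage_congr_sphere hrot,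
    circleAverage_const]

lemma le_mollify (hε : 0 < ε) (hf : Measurable f) (hB : ∀ z, |f z| ≤ B) {z : CSpace n}
    (h : ∀ y, ‖y‖ < ε → f z ≤ discMean f z y) : f z ≤ mollify ε f z := by
  have := isProbabilityMeasure_bumpMeasure (n := n) hε
  calc f z = ∫ _, f z ∂bumpMeasure n ε := by simp
    _ ≤ ∫ y, discMean f z y ∂bumpMeasure n ε :=
        integral_mono_ae (integrable_const _) (integrable_bumpMeasure_of_bounded hε
          (measurable_discMean hf measurable_const measurable_id) fun _ => abs_discMean_le hB _ _)
          ((ae_bumpMeasure_norm_lt hε).mono h)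
    _ = mollify ε f z := (mollify_eq_integral_discMean hε hf hB z).symm

end Mollification

section IteratedSmoothMax
variable {α : Type*} {K : ℕ → Set α} {m i k : ℕ} {z : α} {w : ℕ → α → ℝ} {η : ℕ → ℝ}

/-- The iterated smooth maximum of `w k, w (k + 1), …, w (k + i)`. -/
def iteratedSmoothMax (η : ℕ → ℝ) (w : ℕ → α → ℝ) : ℕ → ℕ → α → ℝ
  | 0, k, z => w k z
  | i + 1, k, z => smoothMax (η k) (w k z) (iteratedSmoothMax η w i (k + 1) z)

lemma iteratedSmoothMax_eq (hη : ∀ j, 0 < η j) (hK : Monotone K)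
    (hdec : ∀ j, ∀ z ∈ K j, w (j + 1) z + η j ≤ w j z) (hmk : m ≤ k) (hz : z ∈ K m) :
    iteratedSmoothMax η w i k z = w k z := by
  induction i generalizing k with
  | zero => rfl
  | succ i ih =>
    rw [iteratedSmoothMax, ih (hmk.trans k.le_succ)]
    exact smoothMax_eq_left (hη k) (hdec k z (hK hmk hz))

lemma iteratedSmoothMax_succ_eq (hη : ∀ j, 0 < η j) (hK : Monotone K)
    (hdec : ∀ j, ∀ z ∈ K j, w (j + 1) z + η j ≤ w j z) (hmk : m ≤ k + i) (hz : z ∈ K m) :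
    iteratedSmoothMax η w (i + 1) k z = iteratedSmoothMax η w i k z := by
  induction i generalizing k with
  | zero => exact iteratedSmoothMax_eq hη hK hdec hmk hz
  | succ i ih => rw [iteratedSmoothMax, ih (k := k + 1) (by omega), ← iteratedSmoothMax]

lemma iteratedSmoothMax_eq_of_le (hη : ∀ j, 0 < η j) (hK : Monotone K)
    (hdec : ∀ j, ∀ z ∈ K j, w (j + 1) z + η j ≤ w j z) (hmi : m ≤ i) (hz : z ∈ K m) :
    iteratedSmoothMax η w i k z = iteratedSmoothMax η w m k z := by
  induction i, hmi using Nat.le_induction with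
  | base => rfl
  | succ i hmi ih =>
    rw [iteratedSmoothMax_succ_eq hη hK hdec (hmi.trans (Nat.le_add_left i k)) hz, ih]

end IteratedSmoothMax

section Exhaustion
variable {E : Type*} [NormedAddCommGroup E] {D : Set E} {K : ℕ → Set E} {z : E}

/-- An increasing exhaustion of `D` by compact sets absorbing every compact subset of `D`. -/
structure IsCompactExhaustion (D : Set E) (K : ℕ → Set E) : Prop where
  isCompact : ∀ m, IsCompact (K m)
  subset : ∀ m, K m ⊆ D
  monotone : Monotone K
  exists_superset : ∀ Q ⊆ D, IsCompact Q → ∃ m, Q ⊆ K m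

lemma exists_isCompactExhaustion [NormedSpace ℂ E] [FiniteDimensional ℂ E] (hD : IsOpen D) :
    ∃ K, IsCompactExhaustion D K := by
  have : ProperSpace E := FiniteDimensional.proper ℂ E
  have : SecondCountableTopology E := secondCountable_of_proper
  have : LocallyCompactSpace D := hD.locallyCompactSpace
  let e : CompactExhaustion D := default
  refine ⟨fun j => (↑) '' e j, fun j => (e.isCompact j).image continuous_subtype_val,
    fun j => Subtype.coe_image_subset D (e j), fun _ _ h => Set.image_mono (e.subset h), ?_⟩
  intro Q hQD hQ
  have hpre : IsCompact ((↑) ⁻¹' Q : Set D) := by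
    rwa [Topology.IsInducing.subtypeVal.isCompact_iff, Subtype.image_preimage_coe,
      Set.inter_eq_right.2 hQD]
  obtain ⟨m, hm⟩ := e.exists_superset_of_isCompact hpre
  exact ⟨m, fun x hx => ⟨⟨x, hQD hx⟩, hm hx, rfl⟩⟩

lemma IsCompactExhaustion.eventually_subset (hK : IsCompactExhaustion D K) {Q : Set E}
    (hQD : Q ⊆ D) (hQ : IsCompact Q) : ∀ᶠ m in atTop, Q ⊆ K m := by
  obtain ⟨m, hm⟩ := hK.exists_superset Q hQD hQ
  exact (eventually_ge_atTop m).mono fun k hk => hm.trans (hK.monotone hk)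

lemma IsCompactExhaustion.eventually_mem (hK : IsCompactExhaustion D K) (hz : z ∈ D) :
    ∀ᶠ m in atTop, z ∈ K m :=
  (hK.eventually_subset (Set.singleton_subset_iff.2 hz) isCompact_singleton).mono fun _ h => h rfl

section Gluing
variable [NormedSpace ℂ E] [NormedSpace ℝ E] {w : ℕ → E → ℝ} {η : ℕ → ℝ}

lemma exists_isSmoothPSHOn_eqOn_of_stabilizing [ProperSpace E] (hK : IsCompactExhaustion D K)
    (hD : IsOpen D) {V : ℕ → E → ℝ} (hV : ∀ m, IsSmoothPSHOn D (V m))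
    (hstab : ∀ m i, m ≤ i → Set.EqOn (V i) (V m) (K m)) :
    ∃ v, IsSmoothPSHOn D v ∧ ∀ m, Set.EqOn v (V m) (K m) := by
  set v : E → ℝ := fun z => limUnder atTop fun i => V i z
  have hv (m : ℕ) : Set.EqOn v (V m) (K m) := fun z hz =>
    (tendsto_const_nhds.congr' <| (eventually_ge_atTop m).mono fun i hi =>
      (hstab m i hi hz).symm).limUnder_eq
  refine ⟨v, ⟨fun z hz => ?_, fun a b hab => ?_⟩, hv⟩
  · obtain ⟨r, hr, hrD⟩ := nhds_basis_closedBall.mem_iff.1 (hD.mem_nhds hz)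
    obtain ⟨m, hm⟩ := hK.exists_superset _ hrD (isCompact_closedBall z r)
    refine ((hV m).1 z hz).congr_of_eventuallyEq (mem_nhdsWithin_of_mem_nhds ?_)
      (hv m (hm (mem_closedBall_self hr.le)))
    exact mem_of_superset (closedBall_mem_nhds z hr) fun y hy => hv m (hm hy)
  · obtain ⟨m, hm⟩ := hK.exists_superset _ hab isCompact_closedDisc
    rw [hv m (hm center_mem_closedDisc), discMean_congr ((hv m).mono hm)]
    exact (hV m).2 hab

lemma isSmoothPSHOn_iteratedSmoothMax (hη : ∀ j, 0 < η j) (hw : ∀ j, IsSmoothPSHOn D (w j))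
    (i k : ℕ) : IsSmoothPSHOn D (iteratedSmoothMax η w i k) := by
  induction i generalizing k with
  | zero => exact hw k
  | succ i ih => exact (hw k).comp_smoothMax (hη k) (ih (k + 1))

-- `v k` is the locally finite smooth maximum of all `w j` with `j ≥ k`.
lemma exists_antitone_isSmoothPSHOn [ProperSpace E] (hK : IsCompactExhaustion D K) (hD : IsOpen D)
    (hw : ∀ j, IsSmoothPSHOn D (w j)) (hη : ∀ j, 0 < η j)
    (hdec : ∀ j, ∀ z ∈ K j, w (j + 1) z + η j ≤ w j z) :
    ∃ v : ℕ → E → ℝ, (∀ k, IsSmoothPSHOn D (v k)) ∧ (∀ k, ∀ z ∈ D, v (k + 1) z ≤ v k z) ∧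
      ∀ k, Set.EqOn (v k) (w k) (K k) := by
  choose v hv heq using fun k => exists_isSmoothPSHOn_eqOn_of_stabilizing hK hD
    (fun i => isSmoothPSHOn_iteratedSmoothMax hη hw i k)
    fun m i hmi z hz => iteratedSmoothMax_eq_of_le hη hK.monotone hdec hmi hz
  refine ⟨v, hv, fun k z hz => ?_, fun k z hz => ?_⟩
  · obtain ⟨m, hm⟩ := (hK.eventually_mem hz).exists
    rw [heq (k + 1) m hm, heq k (m + 1) (hK.monotone m.le_succ hm), iteratedSmoothMax]
    exact le_smoothMax_right (hη k) _ _
  · rw [heq k k hz, iteratedSmoothMax_eq hη hK.monotone hdec le_rfl hz]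

end Gluing
end Exhaustion

section Criterion
variable {n : ℕ} {D : Set (CSpace n)} {K : ℕ → Set (CSpace n)} {u : CSpace n → EReal}
  {w : ℕ → CSpace n → ℝ}

/-- On every compact `K ⊆ D`, every upper semicontinuous function bounded below with the sub-mean
value property on `D` has a smooth plurisubharmonic majorant on `D` which, at points of `K`, is
almost bounded by the local suprema of the function. -/
def HasSmoothMajorants (D : Set (CSpace n)) : Prop :=
  ∀ f : CSpace n → ℝ, UpperSemicontinuousOn f D → IsSubMeanOn D f → BddBelow (f '' D) →
    ∀ K ⊆ D, IsCompact K → ∀ δ > 0, ∃ w, IsSmoothPSHOn D w ∧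
      ∀ z ∈ K, f z < w z ∧ ∀ c, (∀ y ∈ ball z δ ∩ D, f y ≤ c) → w z ≤ c + δ

/-- The smooth plurisubharmonic functions `w N` majorise `u` on the compacts `K N` and converge to
`u` from above, in the locally uniform sense available for upper semicontinuous limits. -/
structure IsUpperApproximation (D : Set (CSpace n)) (K : ℕ → Set (CSpace n)) (u : CSpace n → EReal)
    (w : ℕ → CSpace n → ℝ) : Prop where
  isSmoothPSHOn : ∀ N, IsSmoothPSHOn D (w N)
  lt : ∀ N, ∀ z ∈ K N, u z < w N z
  eventually_lt : ∀ Q ⊆ D, IsCompact Q → ∀ g : CSpace n → ℝ, ContinuousOn g D →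
    (∀ z ∈ Q, u z < g z) → ∀ᶠ N in atTop, ∀ z ∈ Q, w N z < g z

lemma IsPSHOn.eventually_trunc_add_lt (hu : IsPSHOn D u) (hD : IsOpen D) {Q : Set (CSpace n)}
    (hQD : Q ⊆ D) (hQ : IsCompact Q) {g : CSpace n → ℝ} (hg : ContinuousOn g D)
    (hug : ∀ z ∈ Q, u z < g z) {δ : ℕ → ℝ} (hδ : Tendsto δ atTop (𝓝 0)) :
    ∀ᶠ N in atTop, ∀ z ∈ Q, ∃ c, (∀ y ∈ ball z (δ N) ∩ D, trunc u N y ≤ c) ∧ c + δ N < g z := by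
  refine hQ.induction_on (p := fun S => ∀ᶠ N in atTop, ∀ z ∈ S, ∃ c,
    (∀ y ∈ ball z (δ N) ∩ D, trunc u N y ≤ c) ∧ c + δ N < g z) (by simp)
    (fun _ _ hST hT => hT.mono fun N hN z hz => hN z (hST hz))
    (fun _ _ hS hT => (hS.and hT).mono fun N hN z hz => hz.elim (hN.1 z) (hN.2 z))
    fun z hz => ?_
  obtain ⟨c, huc, hcg⟩ := EReal.lt_iff_exists_real_btwn.1 (hug z hz)
  obtain ⟨c', hcc', hcg'⟩ := exists_between (EReal.coe_lt_coe_iff.1 hcg)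
  obtain ⟨m, hm⟩ := exists_nat_gt (-c)
  have hnear : ∀ᶠ y in 𝓝 z, (y ∈ D → trunc u m y < c) ∧ c' < g y :=
    (eventually_nhdsWithin_iff.1 (hu.upperSemicontinuousOn_trunc m z (hQD hz) c
      (trunc_lt (hu.2.1 z (hQD hz)) huc (by linarith)))).and
    ((hg.continuousAt (hD.mem_nhds (hQD hz))).eventually_const_lt hcg')
  obtain ⟨r, hr, hball⟩ := eventually_nhds_iff_ball.1 hnear
  refine ⟨_, mem_nhdsWithin_of_mem_nhds (ball_mem_nhds z (half_pos hr)), ?_⟩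
  filter_upwards [eventually_ge_atTop m, hδ.eventually_lt_const (half_pos hr),
    hδ.eventually_lt_const (sub_pos.2 hcc')] with N hmN hδr hδc x hx
  refine ⟨c, fun y hy => (trunc_anti hmN (hu.2.1 y hy.2)).trans ?_, ?_⟩
  · refine ((hball y ?_).1 hy.2).le
    exact (dist_triangle y x z).trans_lt (by linarith [mem_ball.1 hy.1, mem_ball.1 hx])
  · linarith [(hball x (ball_subset_ball (half_le_self hr.le) hx)).2]

lemma HasSmoothMajorants.exists_isUpperApproximation (h : HasSmoothMajorants D) (hD : IsOpen D)
    (hu : IsPSHOn D u) (hK : IsCompactExhaustion D K) : ∃ w, IsUpperApproximation D K u w := by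
  have hbdd (N : ℕ) : BddBelow (trunc u N '' D) :=
    ⟨-N, Set.forall_mem_image.2 fun z hz => neg_le_trunc (hu.2.1 z hz)⟩
  choose w hw hwK using fun N : ℕ => h (trunc u N) (hu.upperSemicontinuousOn_trunc N)
    (hu.isSubMeanOn_trunc N) (hbdd N) (K N) (hK.subset N) (hK.isCompact N) (1 / ((N : ℝ) + 1))
    Nat.one_div_pos_of_nat
  refine ⟨w, hw, fun N z hz => ?_, fun Q hQD hQ g hg hug => ?_⟩
  · exact (le_trunc (hu.2.1 z (hK.subset N hz))).trans_lt (EReal.coe_lt_coe_iff.2 (hwK N z hz).1)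
  · filter_upwards [hK.eventually_subset hQD hQ, hu.eventually_trunc_add_lt hD hQD hQ hg hug
      tendsto_one_div_add_atTop_nhds_zero_nat] with N hQN hN z hz
    obtain ⟨c, hc, hcg⟩ := hN z hz
    exact ((hwK N z (hQN hz)).2 c hc).trans_lt hcg

lemma IsUpperApproximation.tendsto (hw : IsUpperApproximation D K u w)
    (hK : IsCompactExhaustion D K) {z : CSpace n} (hz : z ∈ D) :
    Tendsto (fun N => (w N z : EReal)) atTop (𝓝 (u z)) := by
  refine tendsto_order.2 ⟨fun a ha => ?_, fun b hb => ?_⟩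
  · exact (hK.eventually_mem hz).mono fun N hN => ha.trans (hw.lt N z hN)
  · obtain ⟨c, huc, hcb⟩ := EReal.lt_iff_exists_real_btwn.1 hb
    refine (hw.eventually_lt {z} (Set.singleton_subset_iff.2 hz) isCompact_singleton (fun _ => c)
      continuousOn_const (by simpa using huc)).mono fun N hN => ?_
    exact (EReal.coe_lt_coe_iff.2 (hN z rfl)).trans hcb

lemma IsUpperApproximation.exists_subseq (hw : IsUpperApproximation D K u w)
    (hK : IsCompactExhaustion D K) : ∃ φ : ℕ → ℕ, StrictMono φ ∧
      ∀ k, ∀ z ∈ K k, w (φ (k + 1)) z < w (φ k) z := by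
  have hnext (N : ℕ) : ∃ N' > N, ∀ z ∈ K N, w N' z < w N z :=
    ((eventually_gt_atTop N).and (hw.eventually_lt (K N) (hK.subset N) (hK.isCompact N) (w N)
      (hw.isSmoothPSHOn N).1.continuousOn (hw.lt N))).exists
  choose next hlt hnext using hnext
  have hmono : StrictMono fun k => next^[k] 0 := strictMono_nat_of_lt_succ fun k => by
    simpa only [Function.iterate_succ_apply'] using hlt (next^[k] 0)
  refine ⟨_, hmono, fun k z hz => ?_⟩
  simpa only [Function.iterate_succ_apply'] using hnext _ z (hK.monotone (hmono.id_le k) hz)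

theorem HasSmoothMajorants.isSDomain (h : HasSmoothMajorants D) (hD : IsOpen D)
    (hconn : IsConnected D) : IsSDomain D := by
  refine ⟨hD, hconn, fun u hu => ?_⟩
  obtain ⟨K, hK⟩ := exists_isCompactExhaustion hD
  obtain ⟨w, hw⟩ := h.exists_isUpperApproximation hD hu hK
  obtain ⟨φ, hφ, hdec⟩ := hw.exists_subseq hK
  obtain ⟨v, hv, hanti, heq⟩ := exists_antitone_isSmoothPSHOn hK hD
    (w := fun k z => w (φ k) z + 2 * (1 / 2) ^ k) (η := fun k => (1 / 2) ^ k)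
    (fun k => (hw.isSmoothPSHOn (φ k)).add_const _) (fun k => by positivity)
    fun k z hz => by rw [pow_succ]; linarith [hdec k z hz]
  refine ⟨v, fun k => (hv k).1, fun k => (hv k).2.isPSHOn (hv k).1.continuousOn, hanti,
    fun z hz => ?_⟩
  have hcorr : Tendsto (fun k : ℕ => ((2 * (1 / 2) ^ k : ℝ) : EReal)) atTop (𝓝 (0 : ℝ)) :=
    continuous_coe_real_ereal.continuousAt.tendsto.comp <| by
      simpa using (tendsto_pow_atTop_nhds_zero_of_lt_one (r := (1 / 2 : ℝ)) (by norm_num)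
        (by norm_num)).const_mul 2
  have hlim := (EReal.continuousAt_add (p := (u z, ((0 : ℝ) : EReal))) (by simp) (by simp)).tendsto
    |>.comp (((hw.tendsto hK hz).comp hφ.tendsto_atTop).prodMk_nhds hcorr)
  simp only [EReal.coe_zero, add_zero] at hlim
  refine hlim.congr' ((hK.eventually_mem hz).mono fun k hk => ?_)
  simp [heq k hk]

end Criterion

section Smoothing
variable {X : Type*} [TopologicalSpace X] {n : ℕ} {f : CSpace n → ℝ} {D K : Set (CSpace n)}
  {δ : ℝ} {q : CSpace n}

open Classical in
lemma upperSemicontinuous_piecewise_const {L : Set X} {g : X → ℝ} {m : ℝ} (hL : IsClosed L)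
    (hg : UpperSemicontinuousOn g L) (hm : ∀ x ∈ L, m ≤ g x) :
    UpperSemicontinuous (L.piecewise g fun _ => m) := by
  intro x c hc
  by_cases hx : x ∈ L
  · rw [Set.piecewise_eq_of_mem _ _ _ hx] at hc
    filter_upwards [eventually_nhdsWithin_iff.1 (hg x hx c hc)] with y hy
    by_cases hyL : y ∈ L
    · rw [Set.piecewise_eq_of_mem _ _ _ hyL]
      exact hy hyL
    · rw [Set.piecewise_eq_of_notMem _ _ _ hyL]
      exact (hm x hx).trans_lt hc
  · rw [Set.piecewise_eq_of_notMem _ _ _ hx] at hc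
    filter_upwards [hL.isOpen_compl.mem_nhds hx] with y hy
    rwa [Set.piecewise_eq_of_notMem _ _ _ hy]

lemma exists_upperSemicontinuous_bounded_eqOn {L : Set X} {g : X → ℝ} (hL : IsCompact L)
    (hLc : IsClosed L) (hg : UpperSemicontinuousOn g L) (hbdd : BddBelow (g '' L)) :
    ∃ G : X → ℝ, UpperSemicontinuous G ∧ Set.EqOn G g L ∧ ∃ B, ∀ x, |G x| ≤ B := by
  classical
  obtain ⟨m, hm⟩ := hbdd
  obtain ⟨M, hM⟩ := hg.bddAbove_of_isCompact hL
  refine ⟨L.piecewise g fun _ => m, upperSemicontinuous_piecewise_const hLc hg fun x hx =>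
    hm ⟨x, hx, rfl⟩, Set.piecewise_eqOn L g _, max |m| |M|, fun x => ?_⟩
  by_cases hx : x ∈ L
  · rw [Set.piecewise_eq_of_mem _ _ _ hx]
    exact abs_le_max_abs_abs (hm ⟨x, hx, rfl⟩) (hM ⟨x, hx, rfl⟩)
  · rw [Set.piecewise_eq_of_notMem _ _ _ hx]
    exact le_max_left _ _

lemma exists_contDiff_isSubMeanOn_of_isCompact (hD : IsOpen D) (hf : UpperSemicontinuousOn f D)
    (hsub : IsSubMeanOn D f) (hbdd : BddBelow (f '' D)) (hK : IsCompact K) (hKD : K ⊆ D)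
    (hδ : 0 < δ) : ∃ s, ContDiff ℝ ∞ s ∧ IsSubMeanOn K s ∧
      ∀ z ∈ K, f z ≤ s z ∧ ∀ c, (∀ y ∈ ball z δ ∩ D, f y ≤ c) → s z ≤ c := by
  obtain ⟨ε₀, hε₀, hLD⟩ := hK.exists_cthickening_subset_open hD hKD
  obtain ⟨F, hF, hFf, B, hB⟩ := exists_upperSemicontinuous_bounded_eqOn hK.cthickening
    isClosed_cthickening (hf.mono hLD) (hbdd.mono (Set.image_mono hLD))
  have hFsub : IsSubMeanOn (cthickening ε₀ K) F := (hsub.mono hLD).congr hFf.symm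
  have hε : 0 < min ε₀ δ := lt_min hε₀ hδ
  have hmem {z y : CSpace n} (hz : z ∈ K) (hy : ‖y‖ < min ε₀ δ) : z - y ∈ cthickening ε₀ K :=
    mem_cthickening_of_dist_le _ z _ _ hz (by simpa using (hy.trans_le (min_le_left _ _)).le)
  refine ⟨mollify (min ε₀ δ) F, contDiff_mollify hε hF.measurable hB, fun a b hab => ?_,
    fun z hz => ⟨?_, fun c hc => ?_⟩⟩
  · refine mollify_le_discMean hε hF.measurable hB fun y hy =>
      hFsub (closedDisc_subset_iff.2 fun l hl => ?_)
    rw [sub_add_eq_add_sub]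
    exact hmem (hab (add_smul_mem_closedDisc hl)) hy
  · rw [← hFf (self_subset_cthickening K hz)]
    refine le_mollify hε hF.measurable hB fun y hy =>
      hFsub (closedDisc_subset_iff.2 fun l hl => ?_)
    rw [← sub_neg_eq_add]
    refine hmem hz (lt_of_le_of_lt ?_ hy)
    rw [norm_neg, norm_smul]
    exact mul_le_of_le_one_left (norm_nonneg y) hl
  · refine mollify_le hε hF.measurable hB fun y hy => ?_
    rw [hFf (hmem hz hy)]
    refine hc _ ⟨?_, hLD (hmem hz hy)⟩
    rw [mem_ball, dist_eq_norm, sub_sub_cancel_left, norm_neg]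
    exact hy.trans_le (min_le_right _ _)

lemma exists_isSmoothPSHOn_of_mapsTo (hD : IsOpen D) (hb : Bornology.IsBounded D)
    (hf : UpperSemicontinuousOn f D) (hsub : IsSubMeanOn D f) (hbdd : BddBelow (f '' D)) {l : ℂ}
    (hl : Set.MapsTo (fun z => z + l • (q - z)) (closure D) D) (hδ : 0 < δ)
    (hlδ : ∀ z ∈ D, ‖l • (q - z)‖ < δ / 2) :
    ∃ s, IsSmoothPSHOn D s ∧ ∀ z ∈ D, f (z + l • (q - z)) ≤ s z ∧
      ∀ c, (∀ y ∈ ball z δ ∩ D, f y ≤ c) → s z ≤ c := by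
  obtain ⟨s, hs, hsK, hfs⟩ := exists_contDiff_isSubMeanOn_of_isCompact hD hf hsub hbdd
    (hb.isCompact_closure.image (by fun_prop : Continuous fun z => z + l • (q - z)))
    hl.image_subset (half_pos hδ)
  have hmem {z : CSpace n} (hz : z ∈ D) := Set.mem_image_of_mem (fun z => z + l • (q - z))
    (subset_closure hz)
  refine ⟨fun z => s (z + l • (q - z)), ⟨(hs.comp (by fun_prop)).contDiffOn,
    hsK.comp_add_smul_sub q l fun z hz => hmem hz⟩,
    fun z hz => ⟨(hfs _ (hmem hz)).1, fun c hc => ?_⟩⟩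
  refine (hfs _ (hmem hz)).2 c fun y hy => hc y ⟨?_, hy.2⟩
  have hdist : dist (z + l • (q - z)) z < δ / 2 := by simpa using hlδ z hz
  exact (dist_triangle y (z + l • (q - z)) z).trans_lt (by linarith [mem_ball.1 hy.1])

end Smoothing

section Sector
variable {E : Type*} [NormedAddCommGroup E] [NormedSpace ℂ E] {f : E → ℝ} {D : Set E} {z₀ b : E}
  {θ₀ κ T : ℝ}

lemma eventually_closedDisc_smul_subset {U : Set E} (hU : U ∈ 𝓝 z₀) (b : E) :
    ∀ᶠ t : ℝ in 𝓝 0, closedDisc z₀ ((t : ℂ) • b) ⊆ U := by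
  obtain ⟨r, hr, hrU⟩ := nhds_basis_closedBall.mem_iff.1 hU
  have hlim : Tendsto (fun t : ℝ => ‖(t : ℂ) • b‖) (𝓝 0) (𝓝 0) :=
    Continuous.tendsto' (by fun_prop) _ _ (by simp)
  filter_upwards [hlim.eventually_le_const hr] with t ht
  exact closedDisc_subset_closedBall.trans ((closedBall_subset_closedBall ht).trans hrU)

-- Were `g ≤ c'` on the whole arc, the bound `M` off the arc would force the mean below `c`.
lemma exists_mem_arc_lt_of_le_circleAverage {g : ℂ → ℝ} {c c' M : ℝ} (hg : CircleIntegrable g 0 1)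
    (hc : c ≤ circleAverage g 0 1) (hM : ∀ θ, g (circleMap 0 1 θ) ≤ M) (hθ₀ : 0 ≤ θ₀)
    (hθ₀' : θ₀ ≤ 2 * π) (h : θ₀ * c' + (2 * π - θ₀) * M < 2 * π * c) :
    ∃ θ ∈ Set.Icc 0 θ₀, c' < g (circleMap 0 1 θ) := by
  by_contra! hcon
  have hint {x y : ℝ} (hx : x ∈ Set.Icc 0 (2 * π)) (hy : y ∈ Set.Icc 0 (2 * π)) :
      IntervalIntegrable (fun θ => g (circleMap 0 1 θ)) volume x y :=
    IntervalIntegrable.mono_set hg (Set.uIcc_subset_uIcc (by rwa [Set.uIcc_of_le two_pi_pos.le])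
      (by rwa [Set.uIcc_of_le two_pi_pos.le]))
  have h0 : (0 : ℝ) ∈ Set.Icc 0 (2 * π) := ⟨le_rfl, two_pi_pos.le⟩
  have h2π : 2 * π ∈ Set.Icc 0 (2 * π) := ⟨two_pi_pos.le, le_rfl⟩
  have harc := intervalIntegral.integral_mono_on hθ₀ (hint h0 ⟨hθ₀, hθ₀'⟩) (by simp) hcon
  have hrest := intervalIntegral.integral_mono_on hθ₀' (hint ⟨hθ₀, hθ₀'⟩ h2π) (by simp)
    fun θ _ => hM θ
  have hsum := intervalIntegral.integral_add_adjacent_intervals (hint h0 ⟨hθ₀, hθ₀'⟩)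
    (hint ⟨hθ₀, hθ₀'⟩ h2π)
  simp only [intervalIntegral.integral_const, smul_eq_mul, sub_zero] at harc hrest
  rw [circleAverage_def, smul_eq_mul, inv_mul_eq_div, le_div_iff₀ two_pi_pos] at hc
  linarith

lemma IsSubMeanOn.exists_mem_sector_lt (hsub : IsSubMeanOn D f) (hD : IsOpen D)
    (hf : UpperSemicontinuousOn f D) (hbdd : BddBelow (f '' D)) (hz₀ : z₀ ∈ D) (b : E)
    (hθ₀ : 0 < θ₀) (hθ₀' : θ₀ ≤ 2 * π) (hT : 0 < T) (hκ : 0 < κ) :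
    ∃ t ∈ Set.Ioc 0 T, ∃ θ ∈ Set.Icc 0 θ₀, f z₀ - κ < f (z₀ + circleMap 0 t θ • b) := by
  obtain ⟨m, hm⟩ := hbdd
  obtain ⟨κ', hκ', hκ'κ⟩ : ∃ κ' > 0, (2 * π - θ₀) * κ' < θ₀ * κ := by
    refine ⟨θ₀ * κ / (2 * π), by positivity, ?_⟩
    rw [mul_div_assoc', div_lt_iff₀ two_pi_pos]
    nlinarith [mul_pos hθ₀ (mul_pos hθ₀ hκ)]
  have hU : {y | y ∈ D ∧ f y < f z₀ + κ'} ∈ 𝓝 z₀ := by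
    have := hf z₀ hz₀ (f z₀ + κ') (by linarith)
    rw [hD.nhdsWithin_eq hz₀] at this
    exact (hD.eventually_mem hz₀).and this
  obtain ⟨t, hdisc, ht⟩ := (((eventually_closedDisc_smul_subset hU b).filter_mono
    nhdsWithin_le_nhds).and (Ioc_mem_nhdsGT hT)).exists
  have hdiscD : closedDisc z₀ ((t : ℂ) • b) ⊆ D := fun z hz => (hdisc hz).1
  obtain ⟨θ, hθ, hlt⟩ := exists_mem_arc_lt_of_le_circleAverage (c' := f z₀ - κ)
    (circleIntegrable_of_upperSemicontinuousOn hf (fun z hz => hm ⟨z, hz, rfl⟩) hdiscD)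
    (hsub hdiscD) (fun θ => (hdisc (add_smul_mem_closedDisc (by simp))).2.le) hθ₀.le hθ₀'
    (by linarith)
  refine ⟨t, ht, θ, hθ, ?_⟩
  simpa only [circleMap, smul_smul, zero_add, Complex.ofReal_one, one_mul, mul_comm (t : ℂ)]
    using hlt

/-- A small sector of complex homotheties with centre `q` and ratio close to `1` shrinks the
closure of `D` into `D`. Translating along a whole sector, rather than along one direction, is
what lets upper semicontinuous functions be recovered from their values at shrunk points. -/
def IsSectorStarShaped (D : Set E) (q : E) : Prop :=
  ∃ t₀ > 0, ∃ θ₀ ∈ Set.Ioc 0 (2 * π), ∀ t ∈ Set.Ioc 0 t₀, ∀ θ ∈ Set.Icc 0 θ₀,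
    Set.MapsTo (fun z => z + circleMap 0 t θ • (q - z)) (closure D) D

end Sector

section StarShaped
variable {n : ℕ} {f : CSpace n → ℝ} {D : Set (CSpace n)} {q z₀ : CSpace n} {δ κ : ℝ}

lemma IsSectorStarShaped.exists_isSmoothPSHOn_lt (hq : IsSectorStarShaped D q) (hD : IsOpen D)
    (hb : Bornology.IsBounded D) (hf : UpperSemicontinuousOn f D) (hsub : IsSubMeanOn D f)
    (hbdd : BddBelow (f '' D)) (hδ : 0 < δ) (hκ : 0 < κ) (hz₀ : z₀ ∈ D) :
    ∃ s, IsSmoothPSHOn D s ∧ f z₀ - κ < s z₀ ∧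
      ∀ z ∈ D, ∀ c, (∀ y ∈ ball z δ ∩ D, f y ≤ c) → s z ≤ c := by
  obtain ⟨t₀, ht₀, θ₀, hθ₀, hstar⟩ := hq
  obtain ⟨R, hR⟩ := hb.subset_ball q
  have hR₀ : 0 < R := (dist_nonneg (x := z₀) (y := q)).trans_lt (hR hz₀)
  obtain ⟨t, ht, θ, hθ, hlt⟩ := hsub.exists_mem_sector_lt hD hf hbdd hz₀ (q - z₀) hθ₀.1 hθ₀.2
    (lt_min ht₀ (div_pos (half_pos hδ) hR₀)) hκ
  obtain ⟨s, hs, hfs⟩ := exists_isSmoothPSHOn_of_mapsTo hD hb hf hsub hbdd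
    (hstar t ⟨ht.1, ht.2.trans (min_le_left _ _)⟩ θ hθ) hδ fun z hz => by
      rw [norm_smul, norm_circleMap_zero, abs_of_pos ht.1, ← dist_eq_norm, dist_comm]
      calc t * dist z q < t * R := mul_lt_mul_of_pos_left (hR hz) ht.1
        _ ≤ δ / 2 := (le_div_iff₀ hR₀).1 (ht.2.trans (min_le_right _ _))
  exact ⟨s, hs, hlt.trans_le (hfs z₀ hz₀).1, fun z hz => (hfs z hz).2⟩

lemma IsSectorStarShaped.hasSmoothMajorants (hq : IsSectorStarShaped D q) (hD : IsOpen D)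
    (hb : Bornology.IsBounded D) : HasSmoothMajorants D := by
  intro f hf hsub hbdd K hKD hK δ hδ
  rcases K.eq_empty_or_nonempty with rfl | hKne
  · exact ⟨fun _ => 0, ⟨contDiffOn_const, isSubMeanOn_const 0⟩, by simp⟩
  choose! s hs hlt hle using fun z₀ (hz₀ : z₀ ∈ K) => hq.exists_isSmoothPSHOn_lt hD hb hf hsub
    hbdd hδ (show 0 < δ / 4 by positivity) (hKD hz₀)
  have hnhds : ∀ z₀ ∈ K, {z | f z < s z₀ z + δ / 2} ∈ 𝓝 z₀ := fun z₀ hz₀ => by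
    have hfz := hf z₀ (hKD hz₀) (f z₀ + δ / 8) (by linarith)
    rw [hD.nhdsWithin_eq (hKD hz₀)] at hfz
    filter_upwards [hfz, ((hs z₀ hz₀).1.continuousOn.continuousAt
      (hD.mem_nhds (hKD hz₀))).eventually_const_lt (sub_lt_self (s z₀ z₀) (show 0 < δ / 8 by
      positivity))] with z hfz hsz
    linarith [hlt z₀ hz₀]
  obtain ⟨t, htK, hcov⟩ := hK.elim_nhds_subcover _ hnhds
  have ht : t.Nonempty := by
    obtain ⟨z, hz⟩ := hKne
    obtain ⟨i, hi, -⟩ := Set.mem_iUnion₂.1 (hcov hz)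
    exact ⟨i, hi⟩
  obtain ⟨w, hw, hsw, hwc⟩ := exists_isSmoothPSHOn_finset_max ht (fun i hi => hs i (htK i hi))
    (half_pos hδ)
  refine ⟨fun z => w z + δ / 2, hw.add_const _, fun z hz => ⟨?_, fun c hc => ?_⟩⟩
  · obtain ⟨i, hi, hzi⟩ := Set.mem_iUnion₂.1 (hcov hz)
    exact hzi.trans_le (by linarith [hsw i hi z])
  · linarith [hwc z c fun i hi => hle i (htK i hi) z (hKD hz) c hc]

theorem IsSectorStarShaped.isSDomain (hq : IsSectorStarShaped D q) (hD : IsOpen D)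
    (hconn : IsConnected D) (hb : Bornology.IsBounded D) : IsSDomain D :=
  (hq.hasSmoothMajorants hD hb).isSDomain hD hconn

end StarShaped

section Local

lemma norm_one_sub_circleMap_lt_one {t θ : ℝ} (ht : 0 < t) (ht₁ : t ≤ 1) (hθ : |θ| < 1) :
    ‖1 - circleMap 0 t θ‖ < 1 := by
  have hcos : 1 < 2 * cos θ := by
    linarith [one_sub_sq_div_two_le_cos (x := θ), (sq_lt_one_iff_abs_lt_one θ).2 hθ]
  have hsq : ‖1 - circleMap 0 t θ‖ ^ 2 = 1 - 2 * t * cos θ + t ^ 2 := by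
    rw [circleMap_zero, ← Complex.normSq_eq_norm_sq, Complex.normSq_apply]
    simp only [Complex.sub_re, Complex.one_re, Complex.mul_re, Complex.ofReal_re,
      Complex.exp_ofReal_mul_I_re, Complex.ofReal_im, Complex.exp_ofReal_mul_I_im, Complex.sub_im,
      Complex.one_im, Complex.mul_im]
    linear_combination t ^ 2 * sin_sq_add_cos_sq θ
  refine lt_of_pow_lt_pow_left₀ 2 zero_le_one ?_
  rw [hsq]
  nlinarith

variable {E : Type*} [NormedAddCommGroup E] [NormedSpace ℂ E] {q z : E} {t θ R : ℝ}

lemma add_circleMap_smul_sub_mem_ball (ht : 0 < t) (ht₁ : t ≤ 1) (hθ : |θ| < 1)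
    (hz : z ∈ closedBall q R) (hR : 0 < R) : z + circleMap 0 t θ • (q - z) ∈ ball q R := by
  have hcomb : z + circleMap 0 t θ • (q - z) - q = (1 - circleMap 0 t θ) • (z - q) := by module
  rw [mem_ball, dist_eq_norm, hcomb, norm_smul]
  rw [mem_closedBall, dist_eq_norm] at hz
  have := norm_one_sub_circleMap_lt_one ht ht₁ hθ
  nlinarith [norm_nonneg (1 - circleMap 0 t θ)]

variable [NormedSpace ℝ E] [IsScalarTower ℝ ℂ E] {ρ : E → ℝ} {L : E →L[ℝ] ℝ} {c : NNReal}

-- An almost linear function is almost convex along complex homotheties close to real ones.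
lemma apply_add_circleMap_smul_sub_le {S : Set E} (hρ : ApproximatesLinearOn ρ L S c) (hq : q ∈ S)
    (hz : z ∈ S) (hz' : z + circleMap 0 t θ • (q - z) ∈ S) (ht : 0 ≤ t) :
    ρ (z + circleMap 0 t θ • (q - z)) ≤
      (1 - t) * ρ z + t * (ρ q + (2 * c + ‖L‖ * ‖circleMap 0 1 θ - 1‖) * ‖q - z‖) := by
  have hmove := (abs_le.1 (hρ _ hz' _ hz)).2
  have hcentre := (abs_le.1 (hρ _ hq _ hz)).1
  have hrot : L ((circleMap 0 1 θ - 1) • (q - z)) ≤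
      ‖L‖ * (‖circleMap 0 1 θ - 1‖ * ‖q - z‖) :=
    (le_abs_self _).trans ((L.le_opNorm _).trans_eq (by rw [norm_smul]))
  have hsplit : circleMap 0 t θ • (q - z) =
      t • (q - z) + t • (circleMap 0 1 θ - 1) • (q - z) := by
    simp only [circleMap_zero, Complex.ofReal_one]
    module
  have hnorm : ‖circleMap 0 t θ • (q - z)‖ = t * ‖q - z‖ := by
    rw [norm_smul, norm_circleMap_zero, abs_of_nonneg ht]
  rw [add_sub_cancel_left, hnorm, hsplit, map_add, map_smul, map_smul, smul_eq_mul, smul_eq_mul,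
    ← hsplit] at hmove
  nlinarith [mul_le_mul_of_nonneg_left hcentre ht, mul_le_mul_of_nonneg_left hrot ht]

lemma apply_add_circleMap_smul_sub_neg (hρ : ApproximatesLinearOn ρ L (closedBall q R) c)
    (hθ : ρ q + (2 * c + ‖L‖ * ‖circleMap 0 1 θ - 1‖) * R < 0) (ht : 0 < t) (ht₁ : t ≤ 1)
    (hz : z ∈ closedBall q R) (hρz : ρ z ≤ 0)
    (hz' : z + circleMap 0 t θ • (q - z) ∈ closedBall q R) :
    ρ (z + circleMap 0 t θ • (q - z)) < 0 := by
  have hR : ‖q - z‖ ≤ R := by rwa [← dist_eq_norm, dist_comm]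
  refine (apply_add_circleMap_smul_sub_le hρ (mem_closedBall_self ((norm_nonneg _).trans hR)) hz hz'
    ht.le).trans_lt (add_neg_of_nonpos_of_neg (mul_nonpos_of_nonneg_of_nonpos (sub_nonneg.2 ht₁)
    hρz) (mul_neg_of_pos_of_neg ht (hθ.trans_le' ?_)))
  gcongr

lemma starConvex_sublevel_inter_ball (hρ : ApproximatesLinearOn ρ L (closedBall q R) c)
    (hR : 0 < R) (hq : ρ q + 2 * c * R < 0) : StarConvex ℝ q ({z | ρ z < 0} ∩ ball q R) := by
  have hρq : ρ q < 0 := by nlinarith [mul_nonneg c.coe_nonneg hR.le]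
  have hqmem : q ∈ {z | ρ z < 0} ∩ ball q R := ⟨hρq, mem_ball_self hR⟩
  refine (starConvex_iff_forall_pos hqmem).2 fun z ⟨hρz, hz⟩ a b ha hb hab => ?_
  have hpoint : a • q + b • z = z + circleMap 0 a 0 • (q - z) := by
    rw [circleMap_zero, Complex.ofReal_zero, zero_mul, Complex.exp_zero, mul_one,
      eq_sub_of_add_eq' hab]
    module
  have ha₁ : a ≤ 1 := by linarith
  have hball := add_circleMap_smul_sub_mem_ball ha ha₁ (abs_zero.trans_lt one_pos)
    (ball_subset_closedBall hz) hR
  rw [hpoint]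
  exact ⟨apply_add_circleMap_smul_sub_neg hρ (by simpa [circleMap_zero] using hq) ha ha₁
    (ball_subset_closedBall hz) (le_of_lt hρz) (ball_subset_closedBall hball), hball⟩

lemma isSectorStarShaped_sublevel_inter_ball (hcont : Continuous ρ)
    (hρ : ApproximatesLinearOn ρ L (closedBall q R) c) (hR : 0 < R) (hq : ρ q + 2 * c * R < 0) :
    IsSectorStarShaped ({z | ρ z < 0} ∩ ball q R) q := by
  have hlim : Tendsto (fun θ => ρ q + (2 * c + ‖L‖ * ‖circleMap 0 1 θ - 1‖) * R) (𝓝 0)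
      (𝓝 (ρ q + 2 * c * R)) := Continuous.tendsto' (by fun_prop) _ _ (by simp [circleMap_zero])
  obtain ⟨θ₀, hθ₀, hsector⟩ := nhds_basis_closedBall.eventually_iff.1 <|
    (hlim.eventually_lt_const hq).and (continuous_abs.tendsto' (0 : ℝ) 0 abs_zero
      |>.eventually_lt_const zero_lt_one)
  have hclosure : closure ({z | ρ z < 0} ∩ ball q R) ⊆ {z | ρ z ≤ 0} ∩ closedBall q R :=
    closure_minimal (Set.inter_subset_inter (fun z (hz : ρ z < 0) => hz.le) ball_subset_closedBall)
      ((isClosed_le hcont continuous_const).inter isClosed_closedBall)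
  refine ⟨1, one_pos, min θ₀ (2 * π), ⟨lt_min hθ₀ two_pi_pos, min_le_right _ _⟩,
    fun t ht θ hθ z hz => ?_⟩
  obtain ⟨hρz, hzR⟩ := hclosure hz
  obtain ⟨hneg, hθ₁⟩ := hsector (x := θ) (by
    rw [mem_closedBall_zero_iff, norm_of_nonneg hθ.1]
    exact hθ.2.trans (min_le_left _ _))
  have hball := add_circleMap_smul_sub_mem_ball ht.1 ht.2 hθ₁ hzR hR
  exact ⟨apply_add_circleMap_smul_sub_neg hρ hneg ht.1 ht.2 hzR hρz
    (ball_subset_closedBall hball), hball⟩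

end Local

-- The ball is centred inside the domain, at a small distance `h` along an inner normal, and has
-- radius proportional to `h`: on that scale `ρ` differs from `L` by a small multiple of `h`.
theorem exists_isSDomain_sublevel_inter {n : ℕ} {ρ : CSpace n → ℝ} {P : CSpace n}
    {L : CSpace n →L[ℝ] ℝ} (hcont : Continuous ρ) (hρ : HasStrictFDerivAt ρ L P) (hP : ρ P = 0)
    (hL : L ≠ 0) : ∃ U, IsOpen U ∧ P ∈ U ∧ IsSDomain ({z | ρ z < 0} ∩ U) := by
  obtain ⟨N, hN⟩ : ∃ N, L N = 1 :=
    L.toLinearMap.surjective (ContinuousLinearMap.coe_injective.ne hL) 1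
  have hν : 0 < ‖N‖ := norm_pos_iff.2 fun h => one_ne_zero (hN.symm.trans (by rw [h, map_zero]))
  obtain ⟨c, hc⟩ : ∃ c : NNReal, (c : ℝ) = 1 / (8 * ‖N‖) := ⟨⟨_, by positivity⟩, rfl⟩
  have hcν : c * ‖N‖ = 1 / 8 := by rw [hc]; field_simp
  obtain ⟨s, hs, hlin⟩ := hρ.approximates_deriv_on_nhds (c := c)
    (Or.inr (NNReal.coe_pos.1 (hc ▸ by positivity)))
  obtain ⟨r, hr, hrs⟩ := nhds_basis_closedBall.mem_iff.1 hs
  obtain ⟨h, hh⟩ : ∃ h, h = r / (3 * ‖N‖) := ⟨_, rfl⟩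
  have hpos : 0 < h := hh ▸ by positivity
  have hhν : h * ‖N‖ = r / 3 := by rw [hh]; field_simp
  set q := P - h • N
  set R := 2 * (h * ‖N‖)
  have hR : 0 < R := by positivity
  have hPq : dist P q = h * ‖N‖ := by
    rw [dist_eq_norm, sub_sub_cancel, norm_smul, norm_of_nonneg hpos.le]
  have hsub : closedBall q R ⊆ s :=
    (closedBall_subset_closedBall' (by rw [dist_comm, hPq]; linarith)).trans hrs
  have hPU : P ∈ ball q R := by rw [mem_ball, hPq]; linarith [mul_pos hpos hν]
  have hlin' := hlin.mono_set hsub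
  have hqρ : ρ q + 2 * c * R < 0 := by
    have hest := (abs_le.1 (hlin' q (mem_closedBall_self hR.le) P (ball_subset_closedBall hPU))).2
    rw [← dist_eq_norm, dist_comm q, hPq, hP, sub_sub_cancel_left, map_neg, map_smul, hN,
      smul_eq_mul] at hest
    nlinarith
  have hstar := starConvex_sublevel_inter_ball hlin' hR hqρ
  have hρq : ρ q < 0 := by nlinarith [mul_nonneg c.coe_nonneg hR.le]
  have hqD : q ∈ {z | ρ z < 0} ∩ ball q R := ⟨hρq, mem_ball_self hR⟩
  exact ⟨ball q R, isOpen_ball, hPU,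
    (isSectorStarShaped_sublevel_inter_ball hcont hlin' hR hqρ).isSDomain
      ((isOpen_lt hcont continuous_const).inter isOpen_ball)
      (hstar.isPathConnected hqD).isConnected (isBounded_ball.subset Set.inter_subset_right)⟩

section ImplicitGraph

variable {X : Type*} [NormedAddCommGroup X] [NormedSpace ℝ X]

lemma strictMonoOn_of_fderiv_apply_pos {G : X × ℝ → ℝ} (hG : Differentiable ℝ G) {x : X}
    {s : Set ℝ} (hs : Convex ℝ s) (hpos : ∀ t ∈ s, 0 < fderiv ℝ G (x, t) (0, 1)) :
    StrictMonoOn (fun t => G (x, t)) s := by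
  have hderiv (t : ℝ) : HasDerivAt (fun t => G (x, t)) (fderiv ℝ G (x, t) (0, 1)) t :=
    (hG (x, t)).hasFDerivAt.comp_hasDerivAt t ((hasDerivAt_const t x).prodMk (hasDerivAt_id t))
  refine strictMonoOn_of_deriv_pos hs (fun t _ => (hderiv t).continuousAt.continuousWithinAt) ?_
  intro t ht
  rw [(hderiv t).deriv]
  exact hpos t (interior_subset ht)

lemma exists_contDiff_eventuallyEq [HasContDiffBump X] {ψ : X → ℝ} {x₀ : X} {U : Set X}
    (hU : U ∈ 𝓝 x₀) (hψ : ∀ x ∈ U, ContDiffAt ℝ ∞ ψ x) :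
    ∃ F, ContDiff ℝ ∞ F ∧ F =ᶠ[𝓝 x₀] ψ := by
  obtain ⟨r, hr, hrU⟩ := nhds_basis_closedBall.mem_iff.1 hU
  let b : ContDiffBump x₀ := ⟨r / 2, r, half_pos hr, half_lt_self hr⟩
  refine ⟨fun x => b x * ψ x, contDiff_iff_contDiffAt.2 fun x => ?_, ?_⟩
  · by_cases hx : x ∈ closedBall x₀ r
    · exact b.contDiffAt.mul (hψ x (hrU hx))
    · refine contDiffAt_const (c := 0) |>.congr_of_eventuallyEq ?_
      filter_upwards [isClosed_closedBall.isOpen_compl.mem_nhds hx] with y hy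
      rw [b.zero_of_le_dist (not_le.1 (mt mem_closedBall.2 hy)).le, zero_mul]
  · filter_upwards [b.eventuallyEq_one] with x hx
    rw [hx, Pi.one_apply, one_mul]

variable [CompleteSpace X]

lemma exists_contDiffAt_implicit {G : X × ℝ → ℝ} {x : X} {t : ℝ} (hG : ContDiffAt ℝ ∞ G (x, t))
    (hne : fderiv ℝ G (x, t) (0, 1) ≠ 0) : ∃ ψ : X → ℝ, ContDiffAt ℝ ∞ ψ x ∧ ψ x = t ∧
      ∀ᶠ y in 𝓝 x, G (y, ψ y) = G (x, t) := by
  have hinv : (fderiv ℝ G (x, t) ∘L .inr ℝ X ℝ).IsInvertible :=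
    ⟨ContinuousLinearEquiv.unitsEquivAut ℝ (Units.mk0 _ hne), by ext; simp⟩
  have hne₀ : (∞ : WithTop ℕ∞) ≠ 0 := by simp
  exact ⟨_, hG.contDiffAt_implicitFunction hne₀ hinv, hG.implicitFunction_apply_self hne₀ hinv,
    hG.eventually_apply_implicitFunction hne₀ hinv⟩

lemma exists_eventually_contDiffAt_neg_iff_lt {G : X × ℝ → ℝ} (hG : ContDiff ℝ ∞ G) {x₀ : X}
    {t₀ : ℝ} (h₀ : G (x₀, t₀) = 0) (hpos : 0 < fderiv ℝ G (x₀, t₀) (0, 1)) :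
    ∃ ψ : X → ℝ, ∃ r > 0, ∀ᶠ x in 𝓝 x₀, ContDiffAt ℝ ∞ ψ x ∧
      ∀ t ∈ ball t₀ r, G (x, t) < 0 ↔ t < ψ x := by
  have hcont : Continuous fun v => fderiv ℝ G v (0, 1) :=
    (hG.continuous_fderiv (by simp)).clm_apply continuous_const
  obtain ⟨r, hr, hbox⟩ := eventually_nhds_iff_ball.1
    ((hcont.tendsto (x₀, t₀)).eventually_const_lt hpos)
  have hbox' : ∀ x ∈ ball x₀ r, ∀ t ∈ ball t₀ r, 0 < fderiv ℝ G (x, t) (0, 1) := fun x hx t ht =>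
    hbox (x, t) (by rw [← ball_prod_same]; exact ⟨hx, ht⟩)
  have hmono : ∀ x ∈ ball x₀ r, StrictMonoOn (fun t => G (x, t)) (ball t₀ r) := fun x hx =>
    strictMonoOn_of_fderiv_apply_pos (hG.differentiable (by simp)) (convex_ball t₀ r) (hbox' x hx)
  have himplicit : ∀ x ∈ ball x₀ r, ∀ t ∈ ball t₀ r, G (x, t) = 0 →
      ∃ ψ : X → ℝ, ContDiffAt ℝ ∞ ψ x ∧ ∀ᶠ y in 𝓝 x, G (y, ψ y) = 0 ∧ ψ y ∈ ball t₀ r := by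
    intro x hx t ht hxt
    obtain ⟨ψ, hψ, hψx, hψG⟩ := exists_contDiffAt_implicit hG.contDiffAt (hbox' x hx t ht).ne'
    exact ⟨ψ, hψ, (hψG.mono fun y hy => hy.trans hxt).and
      (hψ.continuousAt.eventually_mem (isOpen_ball.mem_nhds (by rwa [hψx])))⟩
  obtain ⟨ψ, -, hψ⟩ := himplicit x₀ (mem_ball_self hr) t₀ (mem_ball_self hr) h₀
  refine ⟨ψ, r, hr, ?_⟩
  filter_upwards [(hψ.and (ball_mem_nhds x₀ hr)).eventually_nhds] with x hx
  obtain ⟨⟨hGx, hψx⟩, hxr⟩ := hx.self_of_nhds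
  refine ⟨?_, fun t ht => by rw [← (hmono x hxr).lt_iff_lt ht hψx, hGx]⟩
  obtain ⟨ψ', hψ', hψ'G⟩ := himplicit x hxr (ψ x) hψx hGx
  refine hψ'.congr_of_eventuallyEq ?_
  filter_upwards [hψ'G, hx] with y ⟨hGy', hψy'⟩ ⟨⟨hGy, hψy⟩, hyr⟩
  exact (hmono y hyr).injOn hψy hψy' (hGy.trans hGy'.symm)

lemma exists_contDiff_neg_iff_lt [HasContDiffBump X] {G : X × ℝ → ℝ} (hG : ContDiff ℝ ∞ G)
    {x₀ : X} {t₀ : ℝ} (h₀ : G (x₀, t₀) = 0) (hpos : 0 < fderiv ℝ G (x₀, t₀) (0, 1)) :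
    ∃ (F : X → ℝ) (V : Set (X × ℝ)), ContDiff ℝ ∞ F ∧ IsOpen V ∧ (x₀, t₀) ∈ V ∧
      ∀ v ∈ V, G v < 0 ↔ v.2 < F v.1 := by
  obtain ⟨ψ, r, hr, hψ⟩ := exists_eventually_contDiffAt_neg_iff_lt hG h₀ hpos
  obtain ⟨F, hF, hFψ⟩ := exists_contDiff_eventuallyEq (hψ.mono fun x hx => hx.1) fun _ => id
  obtain ⟨W, hWsub, hW, hx₀W⟩ := _root_.eventually_nhds_iff.1 (hFψ.and hψ)
  refine ⟨F, W ×ˢ ball t₀ r, hF, hW.prod isOpen_ball, ⟨hx₀W, mem_ball_self hr⟩, ?_⟩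
  rintro ⟨x, t⟩ ⟨hx, ht⟩
  obtain ⟨hFx, -, hiff⟩ := hWsub x hx
  rw [hFx, hiff t ht]

end ImplicitGraph

section SmoothBoundary

lemma exists_linearIsometryEquiv_apply_eq {E F : Type*} [NormedAddCommGroup E]
    [InnerProductSpace ℝ E] [FiniteDimensional ℝ E] [NormedAddCommGroup F] [InnerProductSpace ℝ F]
    [FiniteDimensional ℝ F] (hfin : Module.finrank ℝ E = Module.finrank ℝ F) {v : E} {e : F}
    (h : ‖v‖ = ‖e‖) : ∃ φ : E ≃ₗᵢ[ℝ] F, φ v = e := by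
  let φ : E ≃ₗᵢ[ℝ] F :=
    (stdOrthonormalBasis ℝ E).equiv (stdOrthonormalBasis ℝ F) (finCongr hfin)
  exact ⟨φ.trans (ℝ ∙ (φ v - e))ᗮ.reflection, Submodule.reflection_sub (by rw [φ.norm_map, h])⟩

variable {n : ℕ}

lemma finrank_real_cSpace : Module.finrank ℝ (CSpace n) = 2 * n := by
  rw [← Module.finrank_mul_finrank ℝ ℂ (CSpace n), Complex.finrank_real_complex,
    finrank_euclideanSpace_fin]

lemma exists_linearIsometryEquiv_symm_apply_eq (hn : 1 ≤ n) {v : CSpace n} (hv : ‖v‖ = 1) :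
    ∃ φ : CSpace n ≃ₗᵢ[ℝ] WithLp 2 (EuclideanSpace ℝ (Fin (2 * n - 1)) × ℝ),
      φ.symm (WithLp.toLp 2 (0, 1)) = v := by
  obtain ⟨φ, hφ⟩ := exists_linearIsometryEquiv_apply_eq (v := v)
    (e := (WithLp.toLp 2 (0, 1) : WithLp 2 (EuclideanSpace ℝ (Fin (2 * n - 1)) × ℝ)))
    (by
      rw [finrank_real_cSpace, (WithLp.linearEquiv 2 ℝ _).finrank_eq, Module.finrank_prod,
        finrank_euclideanSpace_fin, Module.finrank_self]
      omega)
    (by rw [hv, WithLp.prod_norm_eq_of_L2]; simp)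
  exact ⟨φ, φ.symm_apply_eq.2 hφ.symm⟩

lemma exists_norm_eq_one_apply_pos {E : Type*} [NormedAddCommGroup E] [NormedSpace ℝ E]
    {L : E →L[ℝ] ℝ} (hL : L ≠ 0) : ∃ v, ‖v‖ = 1 ∧ 0 < L v := by
  obtain ⟨x, hx⟩ := L.toLinearMap.surjective (ContinuousLinearMap.coe_injective.ne hL) 1
  have hx' : L x = 1 := hx
  have hnorm : 0 < ‖x‖ := norm_pos_iff.2 fun h => one_ne_zero (hx'.symm.trans (by rw [h, map_zero]))
  refine ⟨‖x‖⁻¹ • x, norm_smul_inv_norm (norm_pos_iff.1 hnorm), ?_⟩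
  rw [map_smul, hx', smul_eq_mul, mul_one]
  exact inv_pos.2 hnorm

theorem hasSmoothBoundary_sublevel (hn : 1 ≤ n) {ρ : CSpace n → ℝ} (hρ : ContDiff ℝ ∞ ρ)
    (hreg : ∀ P, ρ P = 0 → fderiv ℝ ρ P ≠ 0) : HasSmoothBoundary {z | ρ z < 0} := by
  intro p hp
  have hρp : ρ p = 0 := frontier_lt_subset_eq hρ.continuous continuous_const hp
  obtain ⟨v, hv, hpos⟩ := exists_norm_eq_one_apply_pos (hreg p hρp)
  obtain ⟨φ, hφ⟩ := exists_linearIsometryEquiv_symm_apply_eq hn hv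
  let J : (EuclideanSpace ℝ (Fin (2 * n - 1)) × ℝ) ≃L[ℝ] CSpace n :=
    (WithLp.prodContinuousLinearEquiv 2 ℝ _ ℝ).symm.trans φ.symm.toContinuousLinearEquiv
  have hJp : J (WithLp.ofLp (φ p)) = p := φ.symm_apply_apply p
  have hJv : J (0, 1) = v := hφ
  have hderiv : fderiv ℝ (ρ ∘ J) (WithLp.ofLp (φ p)) (0, 1) = fderiv ℝ ρ p v := by
    rw [J.comp_right_fderiv, hJp, ContinuousLinearMap.comp_apply, ContinuousLinearEquiv.coe_coe,
      hJv]
  obtain ⟨F, V, hF, hV, hpV, hiff⟩ := exists_contDiff_neg_iff_lt (hρ.comp J.contDiff)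
    (x₀ := (WithLp.ofLp (φ p)).1) (t₀ := (WithLp.ofLp (φ p)).2)
    (by rw [Function.comp_apply, Prod.mk.eta, hJp, hρp]) (by rwa [Prod.mk.eta, hderiv])
  exact ⟨φ.toIsometryEquiv, F, WithLp.ofLp ⁻¹' V, hF,
    hV.preimage (WithLp.prodContinuousLinearEquiv 2 ℝ _ ℝ).continuous, hpV,
    fun q hq => hiff (WithLp.ofLp q) hq⟩

end SmoothBoundary

section HolomorphicSupport
variable {E : Type*} [NormedAddCommGroup E] [NormedSpace ℂ E] {v w : E → ℝ} {x : E}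

/-- `v` is continuous at `x` and near `x` bounded below by the real part of a holomorphic function
with equality at `x`. A function with this property on an open set is plurisubharmonic there. -/
def IsHolSupportedAt (v : E → ℝ) (x : E) : Prop :=
  ContinuousAt v x ∧ ∃ g : E → ℂ, (∀ᶠ y in 𝓝 x, DifferentiableAt ℂ g y) ∧ (g x).re = v x ∧
    ∀ᶠ y in 𝓝 x, (g y).re ≤ v y

namespace IsHolSupportedAt

lemma congr (h : IsHolSupportedAt v x) (e : v =ᶠ[𝓝 x] w) : IsHolSupportedAt w x := by
  obtain ⟨hc, g, hg, hgx, hgv⟩ := h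
  refine ⟨hc.congr e, g, hg, hgx.trans e.eq_of_nhds, ?_⟩
  filter_upwards [hgv, e] with y hgy hy using hgy.trans_eq hy

lemma of_isLocalMin (hc : ContinuousAt v x) (h : IsLocalMin v x) : IsHolSupportedAt v x :=
  ⟨hc, fun _ => (v x : ℂ), Eventually.of_forall fun _ => differentiableAt_const _, rfl, h⟩

lemma const (c : ℝ) : IsHolSupportedAt (fun _ : E => c) x :=
  of_isLocalMin continuousAt_const (Eventually.of_forall fun _ => le_rfl)

lemma re {g : E → ℂ} (hg : ∀ᶠ y in 𝓝 x, DifferentiableAt ℂ g y) :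
    IsHolSupportedAt (fun y => (g y).re) x :=
  ⟨Complex.continuous_re.continuousAt.comp hg.self_of_nhds.continuousAt, g, hg, rfl,
    Eventually.of_forall fun _ => le_rfl⟩

lemma add (hv : IsHolSupportedAt v x) (hw : IsHolSupportedAt w x) :
    IsHolSupportedAt (fun y => v y + w y) x := by
  obtain ⟨hvc, g, hg, hgx, hgv⟩ := hv
  obtain ⟨hwc, k, hk, hkx, hkw⟩ := hw
  refine ⟨hvc.add hwc, fun y => g y + k y, ?_, by simp [hgx, hkx], ?_⟩
  · filter_upwards [hg, hk] with y hgy hky using hgy.add hky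
  · filter_upwards [hgv, hkw] with y hgy hky using add_le_add hgy hky

lemma const_mul (hv : IsHolSupportedAt v x) {c : ℝ} (hc : 0 ≤ c) :
    IsHolSupportedAt (fun y => c * v y) x := by
  obtain ⟨hvc, g, hg, hgx, hgv⟩ := hv
  refine ⟨continuousAt_const.mul hvc, fun y => c * g y, ?_, by simp [hgx], ?_⟩
  · filter_upwards [hg] with y hgy using hgy.const_mul _
  · filter_upwards [hgv] with y hgy
    simpa only [Complex.re_ofReal_mul] using mul_le_mul_of_nonneg_left hgy hc

lemma max (hv : IsHolSupportedAt v x) (hw : IsHolSupportedAt w x) :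
    IsHolSupportedAt (fun y => max (v y) (w y)) x := by
  wlog hle : w x ≤ v x generalizing v w
  · simpa only [max_comm] using this hw hv (not_le.1 hle).le
  obtain ⟨hvc, g, hg, hgx, hgv⟩ := hv
  refine ⟨hvc.max hw.1, g, hg, hgx.trans (max_eq_left hle).symm, ?_⟩
  filter_upwards [hgv] with y hgy using hgy.trans (le_max_left _ _)

lemma sum {ι : Type*} {s : Finset ι} {f : ι → E → ℝ} (h : ∀ i ∈ s, IsHolSupportedAt (f i) x) :
    IsHolSupportedAt (fun y => ∑ i ∈ s, f i y) x := by
  classical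
  induction s using Finset.induction_on with
  | empty => simpa only [Finset.sum_empty] using const 0
  | insert i s hi ih =>
    simp only [Finset.sum_insert hi]
    exact (h i (Finset.mem_insert_self i s)).add
      (ih fun j hj => h j (Finset.mem_insert_of_mem hj))

lemma comp {F : Type*} [NormedAddCommGroup F] [NormedSpace ℂ F] {φ : F → E} {y : F}
    (h : IsHolSupportedAt v (φ y)) (hφ : Differentiable ℂ φ) :
    IsHolSupportedAt (fun z => v (φ z)) y := by
  obtain ⟨hc, g, hg, hgx, hgv⟩ := h
  have htend : Tendsto φ (𝓝 y) (𝓝 (φ y)) := hφ.continuous.tendsto y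
  refine ⟨hc.tendsto.comp htend, fun z => g (φ z), ?_, hgx, htend.eventually hgv⟩
  filter_upwards [htend.eventually hg] with z hz using DifferentiableAt.comp z hz (hφ z)

lemma eventually_eq_of_isLocalMax (h : IsHolSupportedAt v x) (hmax : IsLocalMax v x) :
    ∀ᶠ y in 𝓝 x, v y = v x := by
  obtain ⟨-, g, hg, hgx, hgv⟩ := h
  have hexp := Complex.eventually_eq_of_isLocalMax_norm (f := fun y => Complex.exp (g y))
    (hg.mono fun y hy => hy.cexp) (by
      filter_upwards [hgv, hmax] with y hgy hy
      simpa only [Function.comp, Complex.norm_exp, Real.exp_le_exp, hgx] using hgy.trans hy)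
  filter_upwards [hexp, hgv, hmax] with y hgy hvy hy
  refine hy.antisymm ?_
  have hre : (g y).re = (g x).re := by
    simpa only [Function.comp, Complex.norm_exp, Real.exp_eq_exp] using congrArg norm hgy
  rwa [hre, hgx] at hvy

end IsHolSupportedAt

lemma le_of_forall_frontier_le [Nontrivial E] {K : Set E} (hK : IsCompact K) (hv : ContinuousOn v K)
    (hs : ∀ z ∈ interior K, IsHolSupportedAt v z) {c : ℝ} (hc : ∀ z ∈ frontier K, v z ≤ c) :
    ∀ z ∈ K, v z ≤ c := by
  intro z hz
  by_contra! hlt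
  obtain ⟨m, hm, hmax⟩ := hK.exists_isMaxOn ⟨z, hz⟩ hv
  let S : Set E := K ∩ v ⁻¹' {v m}
  have hSclosed : IsClosed S := hv.preimage_isClosed_of_isClosed hK.isClosed isClosed_singleton
  have hSopen : IsOpen S := isOpen_iff_mem_nhds.2 fun p ⟨hpK, hpv⟩ => by
    have hpint : p ∈ interior K := by
      by_contra hp
      exact absurd (hc p ⟨subset_closure hpK, hp⟩) (not_le.2 (hpv ▸ hlt.trans_le (hmax hz)))
    have hKp : K ∈ 𝓝 p := mem_interior_iff_mem_nhds.1 hpint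
    have hpmax : IsLocalMax v p := by
      filter_upwards [hKp] with y hy using (hmax hy).trans_eq hpv.symm
    filter_upwards [hKp, (hs p hpint).eventually_eq_of_isLocalMax hpmax] with y hyK hy
    exact ⟨hyK, hy.trans hpv⟩
  have huniv : S = Set.univ := IsClopen.eq_univ ⟨hSclosed, hSopen⟩ ⟨m, hm, rfl⟩
  have := NormedSpace.noncompactSpace ℂ E
  exact noncompact_univ E (huniv ▸ hK.of_isClosed_subset hSclosed Set.inter_subset_left)

lemma exists_re_eq_of_mem_span_fourier {f : C(AddCircle (2 * π), ℂ)}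
    (hf : f ∈ Submodule.span ℂ (Set.range (fourier (T := 2 * π)))) :
    ∃ G : ℂ → ℂ, Differentiable ℂ G ∧ ∀ t, (f t).re = (G (AddCircle.toCircle t)).re := by
  suffices ∀ c : ℂ, ∃ G : ℂ → ℂ, Differentiable ℂ G ∧
      ∀ t, (c * f t).re = (G (AddCircle.toCircle t)).re by
    simpa only [one_mul] using this 1
  induction hf using Submodule.span_induction with
  | mem f hf =>
    obtain ⟨k, rfl⟩ := hf
    obtain ⟨m, rfl | rfl⟩ := Int.eq_nat_or_neg k <;> intro c
    · refine ⟨fun z => c * z ^ m, by fun_prop, fun t => ?_⟩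
      simp [fourier_apply, AddCircle.toCircle_nsmul]
    · refine ⟨fun z => starRingEnd ℂ c * z ^ m, by fun_prop, fun t => ?_⟩
      rw [fourier_apply, AddCircle.toCircle_zsmul, ← Complex.conj_re]
      simp [← Circle.coe_inv_eq_conj]
  | zero => exact fun c => ⟨0, differentiable_const 0, fun t => by simp⟩
  | add f g _ _ hf hg =>
    intro c
    obtain ⟨F, hF, hFf⟩ := hf c
    obtain ⟨G, hG, hGg⟩ := hg c
    exact ⟨F + G, hF.add hG, fun t => by simp [mul_add, -Complex.mul_re, hFf, hGg]⟩
  | smul a f _ hf =>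
    intro c
    obtain ⟨F, hF, hFf⟩ := hf (c * a)
    exact ⟨F, hF, fun t => by rw [← hFf, ContinuousMap.smul_apply, smul_eq_mul, mul_assoc]⟩

lemma exists_differentiable_abs_sub_re_le {v : ℂ → ℝ} (hv : ContinuousOn v (sphere 0 1)) {ε : ℝ}
    (hε : 0 < ε) :
    ∃ G : ℂ → ℂ, Differentiable ℂ G ∧ ∀ z ∈ sphere (0 : ℂ) 1, |v z - (G z).re| ≤ ε := by
  have : Fact (0 < 2 * π) := ⟨two_pi_pos⟩
  let V : C(AddCircle (2 * π), ℂ) := ⟨fun t => (v (AddCircle.toCircle t) : ℂ),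
    Complex.continuous_ofReal.comp <| hv.comp_continuous
      (continuous_subtype_val.comp AddCircle.continuous_toCircle) fun t =>
        mem_sphere_zero_iff_norm.2 (Circle.norm_coe _)⟩
  have hV : V ∈ closure (Submodule.span ℂ (Set.range (fourier (T := 2 * π))) : Set _) := by
    rw [← Submodule.topologicalClosure_coe, span_fourier_closure_eq_top]
    trivial
  obtain ⟨f, hf, hVf⟩ := Metric.mem_closure_iff.1 hV ε hε
  obtain ⟨G, hG, hfG⟩ := exists_re_eq_of_mem_span_fourier hf
  refine ⟨G, hG, fun z hz => ?_⟩
  obtain ⟨t, ht⟩ := (AddCircle.homeomorphCircle two_pi_pos.ne').surjective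
    ⟨z, by simpa [Submonoid.unitSphere] using hz⟩
  obtain rfl : (AddCircle.toCircle t : ℂ) = z := by
    rw [← AddCircle.homeomorphCircle_apply two_pi_pos.ne', ht]
  calc |v (AddCircle.toCircle t) - (G (AddCircle.toCircle t)).re| = |(V t - f t).re| := by
        rw [Complex.sub_re, hfG]; rfl
    _ ≤ ‖V t - f t‖ := Complex.abs_re_le_norm _
    _ ≤ ε := by rw [← dist_eq_norm]; exact (ContinuousMap.dist_apply_le_dist t).trans hVf.le

lemma circleAverage_re_eq {G : ℂ → ℂ} (hG : Differentiable ℂ G) :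
    circleAverage (fun z => (G z).re) 0 1 = (G 0).re := by
  have hint : CircleIntegrable G 0 1 := hG.continuous.continuousOn.circleIntegrable'
  have hre : circleAverage (Complex.reCLM ∘ G) 0 1 = Complex.reCLM (circleAverage G 0 1) :=
    Complex.reCLM.circleAverage_comp_comm hint
  rwa [hG.diffContOnCl.circleAverage] at hre

lemma le_circleAverage_of_isHolSupportedAt {v : ℂ → ℝ} (hv : ContinuousOn v (closedBall 0 1))
    (hs : ∀ z ∈ ball (0 : ℂ) 1, IsHolSupportedAt v z) : v 0 ≤ circleAverage v 0 1 := by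
  refine le_of_forall_pos_le_add fun ε hε => ?_
  obtain ⟨G, hG, hvG⟩ :=
    exists_differentiable_abs_sub_re_le (hv.mono sphere_subset_closedBall) (half_pos hε)
  have hGre : Continuous fun z => (G z).re := Complex.continuous_re.comp hG.continuous
  have hvint : CircleIntegrable v 0 1 := ContinuousOn.circleIntegrable' <|
    hv.mono (by simpa using sphere_subset_closedBall)
  have hmax : v 0 + (-G 0).re ≤ ε / 2 := by
    refine le_of_forall_frontier_le (v := fun z => v z + (-G z).re) (isCompact_closedBall 0 1)
      (hv.add (Complex.continuous_re.comp hG.continuous.neg).continuousOn) ?_ ?_ 0 (by simp)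
    · intro z hz
      rw [interior_closedBall _ one_ne_zero] at hz
      exact (hs z hz).add (.re (Eventually.of_forall hG.neg))
    · intro z hz
      rw [frontier_closedBall _ one_ne_zero] at hz
      simpa [sub_eq_add_neg] using (le_abs_self _).trans (hvG z hz)
  have hmean : (G 0).re ≤ circleAverage v 0 1 + ε / 2 := by
    rw [← circleAverage_re_eq hG, ← circleAverage_const (ε / 2) (0 : ℂ) 1,
      ← circleAverage_fun_add hvint (circleIntegrable_const _ _ _)]
    refine circleAverage_mono hGre.continuousOn.circleIntegrable'
      (hvint.add (circleIntegrable_const _ _ _)) fun z hz => ?_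
    linarith [(abs_le.1 (hvG z (by simpa using hz))).1]
  rw [Complex.neg_re] at hmax
  linarith

lemma isSubMeanOn_of_isHolSupportedAt {Ω : Set E} (hv : ∀ z ∈ Ω, IsHolSupportedAt v z) :
    IsSubMeanOn Ω v := by
  intro a b hab
  have hsupp : ∀ l : ℂ, l ∈ closedBall 0 1 → IsHolSupportedAt (fun l : ℂ => v (a + l • b)) l :=
    fun l hl => (hv _ (closedDisc_subset_iff.1 hab l (by simpa using hl))).comp
      (φ := fun l : ℂ => a + l • b) (by fun_prop)
  simpa [discMean] using le_circleAverage_of_isHolSupportedAt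
    (fun l hl => (hsupp l hl).1.continuousWithinAt) fun l hl => hsupp l (ball_subset_closedBall hl)

end HolomorphicSupport

section DecreasingLimits
variable {n : ℕ} {Ω D : Set (CSpace n)}

lemma tendsto_discMean_of_dominated {F : ℕ → CSpace n → ℝ} {f : CSpace n → ℝ} {a b : CSpace n}
    {C : ℝ} (hF : ∀ᶠ N in atTop, CircleIntegrable (fun l => F N (a + l • b)) 0 1)
    (hC : ∀ᶠ N in atTop, ∀ z ∈ closedDisc a b, |F N z| ≤ C)
    (hlim : ∀ z ∈ closedDisc a b, Tendsto (fun N => F N z) atTop (𝓝 (f z))) :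
    Tendsto (fun N => discMean (F N) a b) atTop (𝓝 (discMean f a b)) := by
  have hmem (θ : ℝ) : a + circleMap 0 1 θ • b ∈ closedDisc a b := add_smul_mem_closedDisc (by simp)
  refine (intervalIntegral.tendsto_integral_filter_of_dominated_convergence (fun _ => C) ?_ ?_
    intervalIntegrable_const ?_).const_smul _
  · filter_upwards [hF] with N hN using hN.def'.aestronglyMeasurable
  · filter_upwards [hC] with N hN using Eventually.of_forall fun θ _ => hN _ (hmem θ)
  · exact Eventually.of_forall fun θ _ => hlim _ (hmem θ)

lemma isPSHOn_iInf {u : ℕ → CSpace n → ℝ} {m : ℝ} (hanti : ∀ z ∈ Ω, Antitone fun N => u N z)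
    (hm : ∀ N, ∀ z ∈ Ω, m ≤ u N z)
    (hs : ∀ z ∈ Ω, ∀ᶠ p in atTop ×ˢ 𝓝 z, IsHolSupportedAt (u p.1) p.2) :
    IsPSHOn Ω fun z => ((⨅ N, u N z : ℝ) : EReal) := by
  have hbdd : ∀ z ∈ Ω, BddBelow (Set.range fun N => u N z) := fun z hz =>
    ⟨m, Set.forall_mem_range.2 fun N => hm N z hz⟩
  have hle : ∀ z ∈ Ω, m ≤ ⨅ N, u N z := fun z hz => le_ciInf fun N => hm N z hz
  have husc : UpperSemicontinuousOn (fun z => ⨅ N, u N z) Ω := by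
    intro z hz c hc
    obtain ⟨N, hN⟩ := exists_lt_of_ciInf_lt hc
    obtain ⟨M, hNM, hM⟩ :=
      ((eventually_ge_atTop N).and ((hs z hz).curry.mono fun _ h => h.self_of_nhds.1)).exists
    filter_upwards [nhdsWithin_le_nhds (hM.eventually_lt_const ((hanti z hz hNM).trans_lt hN)),
      self_mem_nhdsWithin] with y hy hyΩ using (ciInf_le (hbdd y hyΩ) M).trans_lt hy
  refine IsSubMeanOn.isPSHOn_of_circleIntegrable (fun a b hab => ?_) husc fun a b hab =>
    circleIntegrable_of_upperSemicontinuousOn husc hle hab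
  have hsupp : ∀ᶠ N in atTop, ∀ z ∈ closedDisc a b, IsHolSupportedAt (u N) z := by
    have hmem : {p : ℕ × CSpace n | IsHolSupportedAt (u p.1) p.2} ∈
        atTop ×ˢ nhdsSet (closedDisc a b) :=
      isCompact_closedDisc.mem_prod_nhdsSet_of_forall fun z hz => hs z (hab hz)
    exact (Eventually.curry hmem).mono fun N hN => hN.self_of_nhdsSet
  have hcont : ∀ᶠ N in atTop, ContinuousOn (u N) (closedDisc a b) := by
    filter_upwards [hsupp] with N hN using fun z hz => (hN z hz).1.continuousWithinAt
  obtain ⟨N₀, hN₀⟩ := hcont.exists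
  obtain ⟨C, hC⟩ := isCompact_closedDisc.bddAbove_image hN₀
  refine ge_of_tendsto (tendsto_discMean_of_dominated (C := max |m| |C|)
    (hcont.mono fun N hN => circleIntegrable_of_continuousOn hN subset_rfl) ?_
    fun z hz => tendsto_atTop_ciInf (hanti z (hab hz)) (hbdd z (hab hz))) ?_
  · filter_upwards [eventually_ge_atTop N₀] with N hN z hz
    exact abs_le_max_abs_abs (hm N z (hab hz)) ((hanti z (hab hz) hN).trans (hC ⟨z, hz, rfl⟩))
  · filter_upwards [hsupp] with N hN
    exact (ciInf_le (hbdd a (hab center_mem_closedDisc)) N).trans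
      (isSubMeanOn_of_isHolSupportedAt hN subset_rfl)

lemma IsPSHOn.isSubMeanOn {f : CSpace n → ℝ} (hf : IsPSHOn Ω fun z => (f z : EReal))
    (hc : ContinuousOn f Ω) : IsSubMeanOn Ω f := by
  intro a b hab
  obtain ⟨c, hfc⟩ := isCompact_closedDisc.bddBelow_image (hc.mono hab)
  obtain ⟨m, hm⟩ := exists_nat_ge (-c)
  refine ((hf.isSubMeanOn_trunc m).mono hab).congr (fun z hz => ?_) subset_rfl
  have hcz : -(m : ℝ) ≤ f z := (neg_le.1 hm).trans (hfc ⟨z, hz, rfl⟩)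
  exact le_antisymm (trunc_le (EReal.coe_ne_top _) le_rfl hcz)
    (EReal.coe_le_coe_iff.1 (le_trunc (u := fun z => (f z : EReal)) (EReal.coe_ne_top _)))

lemma le_of_tendsto_disc_center {v : CSpace n → ℝ} {a : ℕ → CSpace n} {p b : CSpace n} {c : ℝ}
    (hD : IsOpen D) (hv : IsSubMeanOn D v) (hc : ContinuousOn v D) (hp : p ∈ D)
    (ha : Tendsto a atTop (𝓝 p)) (hdisc : ∀ j, closedDisc (a j) b ⊆ D)
    (hcirc : ∀ l ∈ sphere (0 : ℂ) 1, p + l • b ∈ D ∧ v (p + l • b) < c) : v p ≤ c := by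
  have hopen : IsOpen (D ∩ v ⁻¹' Set.Iio c) := hc.isOpen_inter_preimage hD isOpen_Iio
  have hnear : ∀ᶠ x in 𝓝 p, ∀ l ∈ sphere (0 : ℂ) 1, x + l • b ∈ D ∩ v ⁻¹' Set.Iio c :=
    (isCompact_sphere 0 1).eventually_forall_of_forall_eventually fun l hl =>
      (show Continuous fun y : CSpace n × ℂ => y.1 + y.2 • b by fun_prop).continuousAt.eventually
        (hopen.mem_nhds (hcirc l hl))
  refine le_of_tendsto ((hc.continuousAt (hD.mem_nhds hp)).tendsto.comp ha) ?_
  filter_upwards [ha.eventually hnear] with j hj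
  refine (hv (hdisc j)).trans (circleAverage_mono_on_of_le_circle
    (circleIntegrable_of_continuousOn hc (hdisc j)) fun l hl => (hj l ?_).2.le)
  simpa using hl

/-- Along smooth approximants the bound `u < c` on the limit circle spreads to the nearby circles,
hence to the centres of the discs they bound, although the limit disc itself need not lie in `D`. -/
lemma not_isSDomain_of_disc_limit {u : CSpace n → ℝ} {a : ℕ → CSpace n} {p b : CSpace n} {c : ℝ}
    (hu : IsPSHOn D fun z => (u z : EReal)) (hp : p ∈ D) (hcp : c < u p)
    (ha : Tendsto a atTop (𝓝 p)) (hdisc : ∀ j, closedDisc (a j) b ⊆ D)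
    (hcirc : ∀ l ∈ sphere (0 : ℂ) 1, p + l • b ∈ D ∧ u (p + l • b) < c) : ¬ IsSDomain D := by
  rintro ⟨hD, -, happrox⟩
  obtain ⟨v, hsmooth, hpsh, hdecr, hlim⟩ := happrox _ hu
  have hcont (k : ℕ) : ContinuousOn (v k) D := (hsmooth k).continuousOn
  have hanti : ∀ z ∈ D, Antitone fun k => v k z := fun z hz =>
    antitone_nat_of_succ_le fun k => hdecr k z hz
  have htend : ∀ z ∈ D, Tendsto (fun k => v k z) atTop (𝓝 (u z)) := fun z hz =>
    EReal.tendsto_coe.1 (hlim z hz)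
  obtain ⟨k, hk⟩ : ∃ k, (fun l => p + l • b) '' sphere (0 : ℂ) 1 ⊆ D ∩ v k ⁻¹' Set.Iio c := by
    refine ((isCompact_sphere 0 1).image (by fun_prop)).elim_directed_cover _
      (fun k => (hcont k).isOpen_inter_preimage hD isOpen_Iio) ?_ (Monotone.directed_le ?_)
    · rintro _ ⟨l, hl, rfl⟩
      obtain ⟨hlD, hlc⟩ := hcirc l hl
      obtain ⟨k, hk⟩ := ((htend _ hlD).eventually_lt_const hlc).exists
      exact Set.mem_iUnion.2 ⟨k, hlD, hk⟩
    · exact fun k i hki z hz => ⟨hz.1, (hanti z hz.1 hki).trans_lt hz.2⟩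
  have hvp : v k p ≤ c := le_of_tendsto_disc_center hD ((hpsh k).isSubMeanOn (hcont k)) (hcont k)
    hp ha hdisc fun l hl => hk ⟨l, hl, rfl⟩
  exact hcp.not_ge (((hanti p hp).le_of_tendsto (htend p hp) k).trans hvp)

end DecreasingLimits

section GlueFunction
variable {x : ℝ}

lemma expNegInvGlue_le_one : expNegInvGlue x ≤ 1 := by
  rcases le_or_gt x 0 with hx | hx
  · simp [expNegInvGlue.zero_of_nonpos hx]
  · simpa [expNegInvGlue, not_le.2 hx] using hx.le

lemma two_thirds_le_expNegInvGlue (hx : 3 ≤ x) : 2 / 3 ≤ expNegInvGlue x := by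
  have hinv : x⁻¹ ≤ 3⁻¹ := inv_anti₀ (by norm_num) hx
  rw [expNegInvGlue, if_neg (by linarith)]
  linarith [add_one_le_exp (-x⁻¹)]

lemma exists_pos_hasDerivAt_expNegInvGlue (hx : 0 < x) :
    ∃ c, 0 < c ∧ HasDerivAt expNegInvGlue c x := by
  refine ⟨exp (-x⁻¹) * (x ^ 2)⁻¹, by positivity, ?_⟩
  have h := ((hasDerivAt_inv hx.ne').neg).exp
  rw [neg_neg] at h
  refine h.congr_of_eventuallyEq ?_
  filter_upwards [lt_mem_nhds hx] with y hy
  simp [expNegInvGlue, not_le.2 hy]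

end GlueFunction

section TwistedDomain
variable {x : ℝ} {j : ℕ} {z b a : ℂ} {P : CSpace 3}

/-- The argument of the centre of the fibre of `twistedDomain` over `z`, as a function of
`x = |z|²`. It is `0` at `x = 1` and `x = 3`, and `5` at `x = 2`. -/
def twistAngle (x : ℝ) : ℝ := 5 - 5 * (x - 2) ^ 2

/-- The centre of the fibre of `twistedDomain` over `z`, as a function of `x = |z|²`. -/
def twistCenter (x : ℝ) : ℂ := Complex.exp (twistAngle x * Complex.I)

/-- The correction to the squared radius of the fibres of `twistedDomain`, as a function of
`x = |z|²`: it vanishes for `1 ≤ x ≤ 3`, so that these fibres omit `0`, and makes the fibres empty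
for large `x`. -/
def radiusBump (x : ℝ) : ℝ := expNegInvGlue (1 - x) + expNegInvGlue (x - 3) * (6 - x)

/-- The function of `|a|²` which vanishes on the unit disc and bounds `twistedDomain` in the
direction of `a`. -/
def heightBarrier (t : ℝ) : ℝ := 100 * expNegInvGlue (t - 1)

/-- The points of the `a`-axis, tending to `0`, around which the fibres of `twistedDomain` are
enlarged. -/
def pole (j : ℕ) : ℝ := (1 / 2) ^ (j + 1)

/-- The weight of the logarithmic singularity at `pole j`, chosen so that the weighted logarithms
are summable at the origin. -/
def poleWeight (j : ℕ) : ℝ := (1 / 2) ^ (j + 2) / log (10 / pole j)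

/-- The radius around `pole j` on which the weighted logarithm is at most `-8`. -/
def poleRadius (j : ℕ) : ℝ := 10 * exp (-(8 / poleWeight j))

/-- The set of `a` over which the fibres of `twistedDomain` are enlarged. -/
def roomSet : Set ℂ := {a | ‖a‖ < 1 ∧ ∃ j, ‖a - pole j‖ < poleRadius j}

lemma pole_pos : 0 < pole j := by unfold pole; positivity

lemma pole_le_half : pole j ≤ 1 / 2 :=
  pow_le_of_le_one (by norm_num) (by norm_num) j.succ_ne_zero

lemma norm_pole : ‖(pole j : ℂ)‖ = pole j := Complex.norm_of_nonneg pole_pos.le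

lemma tendsto_pole : Tendsto pole atTop (𝓝 0) :=
  (tendsto_add_atTop_iff_nat 1).2
    (tendsto_pow_atTop_nhds_zero_of_lt_one (by norm_num) (by norm_num))

lemma log_ten_div_pole_pos : 0 < log (10 / pole j) :=
  log_pos ((one_lt_div pole_pos).2 (pole_le_half.trans_lt (by norm_num)))

lemma poleWeight_pos : 0 < poleWeight j := div_pos (by positivity) log_ten_div_pole_pos

lemma poleRadius_pos : 0 < poleRadius j := mul_pos (by norm_num) (exp_pos _)

lemma isOpen_roomSet : IsOpen roomSet := by
  have heq : roomSet = {a : ℂ | ‖a‖ < 1} ∩ ⋃ j, {a : ℂ | ‖a - pole j‖ < poleRadius j} := by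
    ext a
    simp [roomSet]
  rw [heq]
  exact (isOpen_lt continuous_norm continuous_const).inter
    (isOpen_iUnion fun j => isOpen_lt (by fun_prop) continuous_const)

lemma exists_contDiff_support_eq_roomSet : ∃ f : ℂ → ℝ, Function.support f = roomSet ∧
    ContDiff ℝ ∞ f ∧ Set.range f ⊆ Set.Icc 0 1 :=
  isOpen_roomSet.exists_contDiff_support_eq (n := ⊤)

/-- A smooth function with values in `[0, 1]` which is positive exactly on `roomSet`. -/
def roomFun : ℂ → ℝ := exists_contDiff_support_eq_roomSet.choose

lemma contDiff_roomFun : ContDiff ℝ ∞ roomFun :=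
  exists_contDiff_support_eq_roomSet.choose_spec.2.1

lemma roomFun_mem_Icc : roomFun a ∈ Set.Icc 0 1 :=
  exists_contDiff_support_eq_roomSet.choose_spec.2.2 ⟨a, rfl⟩

lemma roomFun_pos_iff : 0 < roomFun a ↔ a ∈ roomSet := by
  rw [← exists_contDiff_support_eq_roomSet.choose_spec.1, Function.mem_support]
  exact ⟨ne_of_gt, roomFun_mem_Icc.1.lt_of_ne'⟩

lemma roomFun_eq_zero (ha : 1 ≤ ‖a‖) : roomFun a = 0 :=
  (not_lt.1 fun h => (roomFun_pos_iff.1 h).1.not_ge ha).antisymm roomFun_mem_Icc.1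

lemma radiusBump_of_le_three (hx : x ≤ 3) : radiusBump x = expNegInvGlue (1 - x) := by
  simp [radiusBump, expNegInvGlue.zero_of_nonpos (sub_nonpos.2 hx)]

lemma radiusBump_of_one_le (hx : 1 ≤ x) : radiusBump x = expNegInvGlue (x - 3) * (6 - x) := by
  simp [radiusBump, expNegInvGlue.zero_of_nonpos (sub_nonpos.2 hx)]

lemma radiusBump_eq_zero (hx : x ∈ Set.Icc 1 3) : radiusBump x = 0 := by
  rw [radiusBump_of_le_three hx.2, expNegInvGlue.zero_of_nonpos (sub_nonpos.2 hx.1)]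

lemma radiusBump_nonneg (hx : x ≤ 6) : 0 ≤ radiusBump x :=
  add_nonneg (expNegInvGlue.nonneg _) (mul_nonneg (expNegInvGlue.nonneg _) (sub_nonneg.2 hx))

lemma radiusBump_le_three : radiusBump x ≤ 3 := by
  rcases le_total x 3 with hx | hx
  · rw [radiusBump_of_le_three hx]
    exact expNegInvGlue_le_one.trans (by norm_num)
  · rw [radiusBump_of_one_le (by linarith)]
    nlinarith [expNegInvGlue_le_one (x := x - 3), expNegInvGlue.nonneg (x - 3)]

lemma antitoneOn_radiusBump : AntitoneOn radiusBump (Set.Ici 6) := by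
  intro x (hx : 6 ≤ x) y _ hxy
  rw [radiusBump_of_one_le (by linarith), radiusBump_of_one_le (by linarith)]
  have hmono : expNegInvGlue (x - 3) ≤ expNegInvGlue (y - 3) :=
    expNegInvGlue.monotone (by linarith)
  nlinarith [expNegInvGlue.nonneg (x - 3)]

lemma exists_neg_hasDerivAt_radiusBump (hx : 6 < x) : ∃ c < 0, HasDerivAt radiusBump c x := by
  obtain ⟨c, hc, hcd⟩ := exists_pos_hasDerivAt_expNegInvGlue (x := x - 3) (by linarith)
  refine ⟨c * (6 - x) + expNegInvGlue (x - 3) * (-1), ?_, ?_⟩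
  · nlinarith [expNegInvGlue.pos_of_pos (x := x - 3) (by linarith)]
  · refine ((hcd.comp_sub_const x 3).mul ((hasDerivAt_id x).const_sub 6)).congr_of_eventuallyEq ?_
    filter_upwards [lt_mem_nhds (show 1 < x by linarith)] with y hy using
      radiusBump_of_one_le hy.le

lemma heightBarrier_nonneg : 0 ≤ heightBarrier x :=
  mul_nonneg (by norm_num) (expNegInvGlue.nonneg _)

lemma monotone_heightBarrier : Monotone heightBarrier := fun s t h =>
  mul_le_mul_of_nonneg_left (expNegInvGlue.monotone (sub_le_sub_right h 1)) (by norm_num)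

lemma heightBarrier_eq_zero (hx : x ≤ 1) : heightBarrier x = 0 := by
  rw [heightBarrier, expNegInvGlue.zero_of_nonpos (sub_nonpos.2 hx), mul_zero]

lemma exists_pos_hasDerivAt_heightBarrier (hx : 1 < x) :
    ∃ c, 0 < c ∧ HasDerivAt heightBarrier c x := by
  obtain ⟨c, hc, hcd⟩ := exists_pos_hasDerivAt_expNegInvGlue (sub_pos.2 hx)
  exact ⟨100 * c, by positivity, (hcd.comp_sub_const x 1).const_mul 100⟩

lemma norm_twistCenter : ‖twistCenter x‖ = 1 := Complex.norm_exp_ofReal_mul_I _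

lemma contDiff_twistAngle : ContDiff ℝ ∞ twistAngle := by unfold twistAngle; fun_prop

lemma contDiff_twistCenter : ContDiff ℝ ∞ twistCenter :=
  ((Complex.ofRealCLM.contDiff.comp contDiff_twistAngle).mul contDiff_const).cexp

lemma contDiff_radiusBump : ContDiff ℝ ∞ radiusBump :=
  have hglue : ContDiff ℝ ∞ expNegInvGlue := expNegInvGlue.contDiff
  (hglue.comp (contDiff_const.sub contDiff_id)).add
    ((hglue.comp (contDiff_id.sub contDiff_const)).mul (contDiff_const.sub contDiff_id))

lemma contDiff_heightBarrier : ContDiff ℝ ∞ heightBarrier :=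
  contDiff_const.mul (expNegInvGlue.contDiff.comp (contDiff_id.sub contDiff_const))

/-- The function of `(z, b, a)` whose negative sublevel set is `twistedDomain`. -/
def definingFun (P : CSpace 3) : ℝ :=
  ‖P 1 - twistCenter (‖P 0‖ ^ 2)‖ ^ 2 - 1 - radiusBump (‖P 0‖ ^ 2) + heightBarrier (‖P 2‖ ^ 2) -
    roomFun (P 2)

/-- The counterexample: its fibre over `(z, a)` is a disc centred at `twistCenter |z|²`. -/
def twistedDomain : Set (CSpace 3) := {P | definingFun P < 0}

lemma mem_twistedDomain : P ∈ twistedDomain ↔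
    ‖P 1 - twistCenter (‖P 0‖ ^ 2)‖ ^ 2 + heightBarrier (‖P 2‖ ^ 2) <
      1 + radiusBump (‖P 0‖ ^ 2) + roomFun (P 2) := by
  change definingFun P < 0 ↔ _
  unfold definingFun
  constructor <;> intro h <;> linarith

lemma mk_mem_twistedDomain : !₂[z, b, a] ∈ twistedDomain ↔
    ‖b - twistCenter (‖z‖ ^ 2)‖ ^ 2 + heightBarrier (‖a‖ ^ 2) <
      1 + radiusBump (‖z‖ ^ 2) + roomFun a :=
  mem_twistedDomain

lemma center_mem_twistedDomain : !₂[z, twistCenter (‖z‖ ^ 2), a] ∈ twistedDomain ↔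
    heightBarrier (‖a‖ ^ 2) < 1 + radiusBump (‖z‖ ^ 2) + roomFun a := by
  simp [mk_mem_twistedDomain]

lemma contDiff_definingFun : ContDiff ℝ ∞ definingFun := by
  have hcoord (i : Fin 3) : ContDiff ℝ ∞ fun P : CSpace 3 => P i := by fun_prop
  have hnorm (i : Fin 3) : ContDiff ℝ ∞ fun P : CSpace 3 => ‖P i‖ ^ 2 := (hcoord i).norm_sq ℝ
  exact (((((hcoord 1).sub (contDiff_twistCenter.comp (hnorm 0))).norm_sq ℝ).sub
    contDiff_const).sub (contDiff_radiusBump.comp (hnorm 0))).add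
    (contDiff_heightBarrier.comp (hnorm 2)) |>.sub (contDiff_roomFun.comp (hcoord 2))

lemma isOpen_twistedDomain : IsOpen twistedDomain :=
  isOpen_lt contDiff_definingFun.continuous continuous_const

lemma norm_zero_lt_of_mem_twistedDomain (hP : P ∈ twistedDomain) : ‖P 0‖ < 4 := by
  rw [mem_twistedDomain] at hP
  by_contra! h
  have hx : 16 ≤ ‖P 0‖ ^ 2 := by nlinarith
  have hbump := antitoneOn_radiusBump (Set.mem_Ici.2 (by norm_num)) (Set.mem_Ici.2 (by linarith)) hx
  rw [radiusBump_of_one_le (x := 16) (by norm_num)] at hbump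
  have hglue := two_thirds_le_expNegInvGlue (x := 16 - 3) (by norm_num)
  generalize expNegInvGlue (16 - 3) = G at hbump hglue
  linarith [heightBarrier_nonneg (x := ‖P 2‖ ^ 2), (roomFun_mem_Icc (a := P 2)).2,
    sq_nonneg ‖P 1 - twistCenter (‖P 0‖ ^ 2)‖]

lemma norm_one_lt_of_mem_twistedDomain (hP : P ∈ twistedDomain) : ‖P 1‖ < 4 := by
  rw [mem_twistedDomain] at hP
  have hdist : ‖P 1 - twistCenter (‖P 0‖ ^ 2)‖ < 3 := by
    by_contra! h
    nlinarith [heightBarrier_nonneg (x := ‖P 2‖ ^ 2), (roomFun_mem_Icc (a := P 2)).2,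
      radiusBump_le_three (x := ‖P 0‖ ^ 2)]
  calc ‖P 1‖ ≤ ‖P 1 - twistCenter (‖P 0‖ ^ 2)‖ + ‖twistCenter (‖P 0‖ ^ 2)‖ :=
        norm_le_norm_sub_add _ _
    _ < 3 + 1 := by rw [norm_twistCenter]; gcongr
    _ = 4 := by norm_num

lemma norm_two_lt_of_mem_twistedDomain (hP : P ∈ twistedDomain) : ‖P 2‖ < 2 := by
  rw [mem_twistedDomain] at hP
  by_contra! h
  have hbarrier : 100 * (2 / 3) ≤ heightBarrier (‖P 2‖ ^ 2) :=
    mul_le_mul_of_nonneg_left (two_thirds_le_expNegInvGlue (by nlinarith)) (by norm_num)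
  linarith [radiusBump_le_three (x := ‖P 0‖ ^ 2), (roomFun_mem_Icc (a := P 2)).2,
    sq_nonneg ‖P 1 - twistCenter (‖P 0‖ ^ 2)‖]

lemma isBounded_twistedDomain : Bornology.IsBounded twistedDomain := by
  refine isBounded_iff_forall_norm_le.2 ⟨10, fun P hP => ?_⟩
  rw [EuclideanSpace.norm_eq, Fin.sum_univ_three, sqrt_le_iff]
  refine ⟨by norm_num, ?_⟩
  nlinarith [norm_nonneg (P 0), norm_nonneg (P 1), norm_nonneg (P 2),
    norm_zero_lt_of_mem_twistedDomain hP, norm_one_lt_of_mem_twistedDomain hP,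
    norm_two_lt_of_mem_twistedDomain hP]

lemma norm_smul_sq_le {t : ℝ} (ht : t ∈ Set.Icc 0 1) (w : ℂ) : ‖t • w‖ ^ 2 ≤ ‖w‖ ^ 2 := by
  rw [norm_smul, norm_of_nonneg ht.1]
  exact pow_le_pow_left₀ (mul_nonneg ht.1 (norm_nonneg w))
    (mul_le_of_le_one_left (norm_nonneg w) ht.2) 2

lemma joinedIn_twistedDomain_center (h : !₂[z, b, a] ∈ twistedDomain) :
    JoinedIn twistedDomain !₂[z, twistCenter (‖z‖ ^ 2), a] !₂[z, b, a] := by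
  let c := twistCenter (‖z‖ ^ 2)
  refine JoinedIn.ofLine (f := fun t : ℝ => !₂[z, c + t • (b - c), a]) (by fun_prop) (by simp [c])
    (by simp) ?_
  rintro _ ⟨t, ht, rfl⟩
  rw [mk_mem_twistedDomain] at h ⊢
  rw [add_sub_cancel_left]
  exact (add_le_add_left (norm_smul_sq_le ht _) _).trans_lt h

lemma joinedIn_twistedDomain_height_zero (h : heightBarrier (‖a‖ ^ 2) < 1 + radiusBump (‖z‖ ^ 2)) :
    JoinedIn twistedDomain !₂[z, twistCenter (‖z‖ ^ 2), 0] !₂[z, twistCenter (‖z‖ ^ 2), a] := by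
  refine JoinedIn.ofLine (f := fun t : ℝ => !₂[z, twistCenter (‖z‖ ^ 2), t • a]) (by fun_prop)
    (by simp) (by simp) ?_
  rintro _ ⟨t, ht, rfl⟩
  rw [center_mem_twistedDomain]
  exact ((monotone_heightBarrier (norm_smul_sq_le ht a)).trans_lt h).trans_le
    (le_add_of_nonneg_right roomFun_mem_Icc.1)

lemma joinedIn_twistedDomain_axis (ha : ‖a‖ ≤ 1)
    (h : !₂[z, twistCenter (‖z‖ ^ 2), a] ∈ twistedDomain) :
    JoinedIn twistedDomain !₂[0, twistCenter 0, a] !₂[z, twistCenter (‖z‖ ^ 2), a] := by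
  have hcont : Continuous fun t : ℝ => twistCenter (‖t • z‖ ^ 2) :=
    contDiff_twistCenter.continuous.comp (by fun_prop)
  refine JoinedIn.ofLine (f := fun t : ℝ => !₂[t • z, twistCenter (‖t • z‖ ^ 2), a])
    (by fun_prop) (by simp) (by simp) ?_
  rintro _ ⟨t, ht, rfl⟩
  rw [center_mem_twistedDomain] at h ⊢
  rw [heightBarrier_eq_zero (pow_le_one₀ (norm_nonneg a) ha)] at h ⊢
  rcases le_total (‖t • z‖ ^ 2) 6 with hx | hx
  · linarith [radiusBump_nonneg hx, (roomFun_mem_Icc (a := a)).1]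
  · have hle := norm_smul_sq_le ht z
    linarith [antitoneOn_radiusBump hx (hx.trans hle) hle]

lemma joinedIn_twistedDomain (hP : P ∈ twistedDomain) :
    JoinedIn twistedDomain !₂[0, twistCenter 0, 0] P := by
  obtain ⟨z, b, a, rfl⟩ : ∃ z b a, P = !₂[z, b, a] :=
    ⟨P 0, P 1, P 2, by ext i; fin_cases i <;> rfl⟩
  refine .trans ?_ (joinedIn_twistedDomain_center hP)
  have hcenter := (joinedIn_twistedDomain_center hP).source_mem
  rcases le_total ‖a‖ 1 with ha | ha
  · refine .trans ?_ (joinedIn_twistedDomain_axis ha hcenter)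
    have h0 : heightBarrier (‖a‖ ^ 2) < 1 + radiusBump (‖(0 : ℂ)‖ ^ 2) := by
      rw [heightBarrier_eq_zero (pow_le_one₀ (norm_nonneg a) ha), norm_zero]
      linarith [radiusBump_nonneg (x := 0 ^ 2) (by norm_num)]
    simpa using joinedIn_twistedDomain_height_zero h0
  · rw [center_mem_twistedDomain, roomFun_eq_zero ha, add_zero] at hcenter
    have hdescend := joinedIn_twistedDomain_height_zero hcenter
    exact (joinedIn_twistedDomain_axis (by simp) hdescend.source_mem).trans hdescend

lemma isConnected_twistedDomain : IsConnected twistedDomain := by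
  have hbase : !₂[0, twistCenter 0, 0] ∈ twistedDomain := by
    refine mk_mem_twistedDomain.2 ?_
    simp only [norm_zero, ne_eq, OfNat.ofNat_ne_zero, not_false_eq_true, zero_pow, sub_self]
    rw [heightBarrier_eq_zero zero_le_one]
    linarith [radiusBump_nonneg (x := 0) (by norm_num), (roomFun_mem_Icc (a := 0)).1]
  exact IsPathConnected.isConnected ⟨_, hbase, fun _ => joinedIn_twistedDomain⟩

end TwistedDomain

section TwistedDomainBoundary
variable {P : CSpace 3}

lemma fderiv_ne_zero_of_hasLineDerivAt {E : Type*} [NormedAddCommGroup E] [NormedSpace ℝ E]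
    {f : E → ℝ} {x v : E} {c : ℝ} (hf : DifferentiableAt ℝ f x) (h : HasLineDerivAt ℝ f c x v)
    (hc : c ≠ 0) : fderiv ℝ f x ≠ 0 := fun h0 =>
  hc (by rw [← h.lineDeriv, hf.lineDeriv_eq_fderiv, h0, zero_apply])

lemma hasDerivAt_norm_add_smul_sq (w : ℂ) :
    HasDerivAt (fun t : ℝ => ‖w + t • w‖ ^ 2) (2 * ‖w‖ ^ 2) 0 := by
  have h := (((hasDerivAt_id (0 : ℝ)).smul_const w).const_add w).norm_sq
  simpa using h

lemma hasDerivAt_comp_norm_add_smul_sq {g : ℝ → ℝ} {c : ℝ} {w : ℂ} (hg : HasDerivAt g c (‖w‖ ^ 2)) :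
    HasDerivAt (fun t : ℝ => g (‖w + t • w‖ ^ 2)) (c * (2 * ‖w‖ ^ 2)) 0 := by
  refine HasDerivAt.comp (h₂ := g) (h := fun t : ℝ => ‖w + t • w‖ ^ 2) 0 ?_
    (hasDerivAt_norm_add_smul_sq w)
  simpa using hg

lemma differentiable_definingFun : Differentiable ℝ definingFun :=
  contDiff_definingFun.differentiable (by simp)

lemma fderiv_definingFun_ne_zero_of_ne_center (h : P 1 ≠ twistCenter (‖P 0‖ ^ 2)) :
    fderiv ℝ definingFun P ≠ 0 := by
  let w := P 1 - twistCenter (‖P 0‖ ^ 2)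
  have hw : 0 < ‖w‖ := norm_pos_iff.2 (sub_ne_zero.2 h)
  have hline : HasLineDerivAt ℝ definingFun (2 * ‖w‖ ^ 2) P !₂[0, w, 0] := by
    refine ((hasDerivAt_norm_add_smul_sq w).add_const
      (-1 - radiusBump (‖P 0‖ ^ 2) + heightBarrier (‖P 2‖ ^ 2) - roomFun (P 2)))
      |>.congr_of_eventuallyEq (.of_forall fun t => ?_)
    have hshift : P 1 + t * w - twistCenter (‖P 0‖ ^ 2) = w + t * w := add_sub_right_comm _ _ _
    simp only [definingFun, Fin.isValue, PiLp.add_apply, PiLp.smul_apply, Matrix.cons_val_one,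
      Matrix.cons_val_zero, Complex.real_smul, smul_zero, add_zero, hshift, Matrix.cons_val]
    ring
  exact fderiv_ne_zero_of_hasLineDerivAt (differentiable_definingFun P) hline (by positivity)

lemma fderiv_definingFun_ne_zero_of_six_lt (h : P 1 = twistCenter (‖P 0‖ ^ 2))
    (hz : 6 < ‖P 0‖ ^ 2) : fderiv ℝ definingFun P ≠ 0 := by
  obtain ⟨c, hc, hcd⟩ := exists_neg_hasDerivAt_radiusBump hz
  have hcenter : HasDerivAt
      (fun t : ℝ => ‖P 1 - twistCenter (‖P 0 + t • P 0‖ ^ 2)‖ ^ 2) 0 0 := by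
    have hd : DifferentiableAt ℝ (fun t : ℝ => P 1 - twistCenter (‖P 0 + t • P 0‖ ^ 2)) 0 :=
      (((contDiff_twistCenter.differentiable (by simp)) _).comp (0 : ℝ)
        (hasDerivAt_norm_add_smul_sq (P 0)).differentiableAt).const_sub _
    simpa [← h] using hd.hasDerivAt.norm_sq
  have hline : HasLineDerivAt ℝ definingFun (0 - c * (2 * ‖P 0‖ ^ 2)) P !₂[P 0, 0, 0] := by
    refine ((hcenter.sub (hasDerivAt_comp_norm_add_smul_sq hcd)).add_const
      (-1 + heightBarrier (‖P 2‖ ^ 2) - roomFun (P 2))).congr_of_eventuallyEq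
      (.of_forall fun t => ?_)
    simp only [definingFun, Fin.isValue, PiLp.add_apply, PiLp.smul_apply, Matrix.cons_val_one,
      Matrix.cons_val_zero, smul_zero, add_zero, Complex.real_smul, Matrix.cons_val, Pi.sub_apply]
    ring
  refine fderiv_ne_zero_of_hasLineDerivAt (differentiable_definingFun P) hline ?_
  nlinarith

lemma fderiv_definingFun_ne_zero_of_one_lt (ha : 1 < ‖P 2‖) : fderiv ℝ definingFun P ≠ 0 := by
  obtain ⟨c, hc, hcd⟩ := exists_pos_hasDerivAt_heightBarrier (one_lt_pow₀ ha two_ne_zero)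
  have hroom : ∀ᶠ t : ℝ in 𝓝 0, roomFun (P 2 + t • P 2) = 0 := by
    have hcont : ContinuousAt (fun t : ℝ => ‖P 2 + t • P 2‖) 0 := by fun_prop
    filter_upwards [hcont.eventually_const_lt (u := 1) (by simpa using ha)] with t ht using
      roomFun_eq_zero ht.le
  have hline : HasLineDerivAt ℝ definingFun (c * (2 * ‖P 2‖ ^ 2)) P !₂[0, 0, P 2] := by
    refine ((hasDerivAt_comp_norm_add_smul_sq hcd).add_const
      (‖P 1 - twistCenter (‖P 0‖ ^ 2)‖ ^ 2 - 1 - radiusBump (‖P 0‖ ^ 2))).congr_of_eventuallyEq ?_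
    filter_upwards [hroom] with t ht
    simp only [Complex.real_smul] at ht
    simp only [definingFun, Fin.isValue, PiLp.add_apply, PiLp.smul_apply, Matrix.cons_val_one,
      Matrix.cons_val_zero, smul_zero, add_zero, Matrix.cons_val, Complex.real_smul, ht, sub_zero]
    ring
  refine fderiv_ne_zero_of_hasLineDerivAt (differentiable_definingFun P) hline ?_
  have := zero_lt_one.trans ha
  positivity

lemma fderiv_definingFun_ne_zero (hP : definingFun P = 0) : fderiv ℝ definingFun P ≠ 0 := by
  by_cases hcenter : P 1 = twistCenter (‖P 0‖ ^ 2)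
  · rcases lt_or_ge 6 (‖P 0‖ ^ 2) with hz | hz
    · exact fderiv_definingFun_ne_zero_of_six_lt hcenter hz
    · refine fderiv_definingFun_ne_zero_of_one_lt (not_le.1 fun ha => ?_)
      rw [definingFun, hcenter, sub_self, norm_zero,
        heightBarrier_eq_zero (pow_le_one₀ (norm_nonneg _) ha)] at hP
      linarith [radiusBump_nonneg hz, (roomFun_mem_Icc (a := P 2)).1]
  · exact fderiv_definingFun_ne_zero_of_ne_center hcenter

lemma hasSmoothBoundary_twistedDomain : HasSmoothBoundary twistedDomain :=
  hasSmoothBoundary_sublevel (by norm_num) contDiff_definingFun fun _ =>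
    fderiv_definingFun_ne_zero

lemma exists_isSDomain_twistedDomain_inter (hP : P ∈ frontier twistedDomain) :
    ∃ U, IsOpen U ∧ P ∈ U ∧ IsSDomain (twistedDomain ∩ U) := by
  have hzero : definingFun P = 0 :=
    frontier_lt_subset_eq contDiff_definingFun.continuous continuous_const hP
  exact exists_isSDomain_sublevel_inter contDiff_definingFun.continuous
    (contDiff_definingFun.contDiffAt.hasStrictFDerivAt (by simp)) hzero
    (fderiv_definingFun_ne_zero hzero)

end TwistedDomainBoundary

section LogAndArg
variable {E : Type*} [NormedAddCommGroup E] [NormedSpace ℂ E] {x : E}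

lemma isHolSupportedAt_log_norm {w : ℂ} (hw : w ≠ 0) : IsHolSupportedAt (fun z => log ‖z‖) w := by
  have hslit : ∀ᶠ z in 𝓝 w, z / w ∈ Complex.slitPlane :=
    (continuousAt_id.div_const w).eventually
      (Complex.isOpen_slitPlane.mem_nhds (by simp [hw]))
  have hdiff : ∀ᶠ z in 𝓝 w, DifferentiableAt ℂ (fun z => Complex.log (z / w)) z := by
    filter_upwards [hslit] with z hz using (differentiableAt_id.div_const w).clog hz
  refine ((IsHolSupportedAt.re hdiff).add (.const (log ‖w‖))).congr ?_
  filter_upwards [eventually_ne_nhds hw] with z hz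
  rw [Complex.log_re, norm_div, log_div (norm_ne_zero_iff.2 hz) (norm_ne_zero_iff.2 hw),
    sub_add_cancel]

lemma isHolSupportedAt_of_coe_eq_arg {β : E → ℝ} {f : E → ℂ} (hβ : ContinuousAt β x)
    (hf : ∀ᶠ y in 𝓝 x, DifferentiableAt ℂ f y) (hfx : f x ≠ 0)
    (harg : ∀ᶠ y in 𝓝 x, (β y : Real.Angle) = Complex.arg (f y)) : IsHolSupportedAt β x := by
  have hquot : ContinuousAt (fun y => f y / f x) x := hf.self_of_nhds.continuousAt.div_const _
  have hone : f x / f x ∈ Complex.slitPlane := by simp [hfx]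
  have hslit : ∀ᶠ y in 𝓝 x, f y / f x ∈ Complex.slitPlane :=
    hquot.eventually (Complex.isOpen_slitPlane.mem_nhds hone)
  have hdiff : ∀ᶠ y in 𝓝 x,
      DifferentiableAt ℂ (fun y => -Complex.I * Complex.log (f y / f x)) y := by
    filter_upwards [hslit, hf] with y hy hfy using
      ((hfy.mul_const (f x)⁻¹).clog hy).const_mul _
  have hjump : ContinuousAt (fun y => β y - β x - Complex.arg (f y / f x)) x :=
    (hβ.sub_const _).sub
      (ContinuousAt.comp (g := Complex.arg) (Complex.continuousAt_arg hone) hquot)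
  have hsmall : ∀ᶠ y in 𝓝 x, β y - β x - Complex.arg (f y / f x) ∈ Set.Ioo (-π) π :=
    hjump.eventually (Ioo_mem_nhds (by simp [hfx, pi_pos]) (by simp [hfx, pi_pos]))
  refine ((IsHolSupportedAt.re hdiff).add (.const (β x))).congr ?_
  filter_upwards [harg, hsmall, hslit] with y hy hs hys
  have hangle : ((β y - β x - Complex.arg (f y / f x) : ℝ) : Real.Angle) = 0 := by
    have hfy : f y ≠ 0 := fun h0 => Complex.slitPlane_ne_zero hys (by rw [h0, zero_div])
    rw [Real.Angle.coe_sub, Real.Angle.coe_sub, Complex.arg_div_coe_angle hfy hfx, hy,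
      harg.self_of_nhds, sub_self]
  have hzero := Real.Angle.toReal_coe_eq_self_iff.2 ⟨hs.1, hs.2.le⟩
  rw [hangle, Real.Angle.toReal_zero] at hzero
  simp only [neg_mul, Complex.neg_re, Complex.mul_re, Complex.I_re, zero_mul, Complex.I_im,
    Complex.log_im, one_mul, zero_sub, neg_neg]
  linarith

end LogAndArg

section TruncLog
variable {N j : ℕ} {a : ℂ}

/-- The weighted logarithm of `‖a - pole j‖ / 10`, truncated at its value `-8` on the circle of
radius `poleRadius j`. -/
def truncLog (j : ℕ) (a : ℂ) : ℝ := poleWeight j * log (max ‖a - pole j‖ (poleRadius j) / 10)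

lemma max_poleRadius_pos : 0 < max ‖a - pole j‖ (poleRadius j) := lt_max_of_lt_right poleRadius_pos

lemma continuous_truncLog : Continuous (truncLog j) :=
  continuous_const.mul (Continuous.log (by fun_prop)
    fun _ => (div_pos max_poleRadius_pos (by norm_num)).ne')

lemma poleWeight_mul_log_poleRadius : poleWeight j * log (poleRadius j / 10) = -8 := by
  rw [poleRadius, mul_div_cancel_left₀ _ (by norm_num), log_exp, mul_neg,
    mul_div_cancel₀ _ poleWeight_pos.ne']

lemma truncLog_eq_of_le (h : ‖a - pole j‖ ≤ poleRadius j) : truncLog j a = -8 := by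
  rw [truncLog, max_eq_right h, poleWeight_mul_log_poleRadius]

lemma neg_eight_le_truncLog : -8 ≤ truncLog j a := by
  rw [← poleWeight_mul_log_poleRadius (j := j)]
  have := poleRadius_pos (j := j)
  exact mul_le_mul_of_nonneg_left (log_le_log (by positivity) (by gcongr; exact le_max_right _ _))
    poleWeight_pos.le

lemma poleRadius_le_ten : poleRadius j ≤ 10 :=
  mul_le_of_le_one_right (by norm_num)
    (exp_le_one_iff.2 (neg_nonpos.2 (div_nonneg (by norm_num) poleWeight_pos.le)))

lemma truncLog_nonpos (ha : ‖a‖ < 2) : truncLog j a ≤ 0 := by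
  refine mul_nonpos_of_nonneg_of_nonpos poleWeight_pos.le
    (log_nonpos (div_pos max_poleRadius_pos (by norm_num)).le ?_)
  refine div_le_one_of_le₀ (max_le ?_ poleRadius_le_ten) (by norm_num)
  have h := norm_sub_le a (pole j)
  rw [norm_pole] at h
  linarith [pole_le_half (j := j)]

lemma neg_pow_le_truncLog_zero : -(1 / 2) ^ (j + 2) ≤ truncLog j 0 := by
  calc -(1 / 2) ^ (j + 2) = poleWeight j * log (pole j / 10) := by
        rw [poleWeight, ← inv_div 10, log_inv, mul_neg, div_mul_cancel₀ _ log_ten_div_pole_pos.ne']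
    _ ≤ truncLog j 0 := by
        have := pole_pos (j := j)
        refine mul_le_mul_of_nonneg_left (log_le_log (by positivity) ?_) poleWeight_pos.le
        gcongr
        exact le_max_of_le_left (by rw [zero_sub, norm_neg, norm_pole])

lemma isHolSupportedAt_truncLog : IsHolSupportedAt (truncLog j) a := by
  rcases le_or_gt ‖a - pole j‖ (poleRadius j) with h | h
  · refine .of_isLocalMin continuous_truncLog.continuousAt (.of_forall fun w => ?_)
    rw [truncLog_eq_of_le h]
    exact neg_eight_le_truncLog
  · have hlog : IsHolSupportedAt (fun w : ℂ => log ‖w - pole j‖) a :=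
      (isHolSupportedAt_log_norm (norm_pos_iff.1 (poleRadius_pos.trans h))).comp
        (φ := fun w => w - (pole j : ℂ)) (by fun_prop)
    refine ((hlog.add (.const (-log 10))).const_mul (poleWeight_pos (j := j)).le).congr ?_
    have hcont : ContinuousAt (fun w : ℂ => ‖w - pole j‖) a := by fun_prop
    filter_upwards [hcont.eventually_const_lt h] with w hw
    rw [truncLog, max_eq_left hw.le, log_div (poleRadius_pos.trans hw).ne' (by norm_num),
      ← sub_eq_add_neg]

/-- The partial sums of a series which is bounded below at the origin, but at most `-8` near
each `pole j`. -/
def truncLogSum (N : ℕ) (a : ℂ) : ℝ := ∑ j ∈ Finset.range N, truncLog j a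

lemma isHolSupportedAt_truncLogSum : IsHolSupportedAt (truncLogSum N) a :=
  .sum fun _ _ => isHolSupportedAt_truncLog

lemma truncLogSum_nonpos (ha : ‖a‖ < 2) : truncLogSum N a ≤ 0 :=
  Finset.sum_nonpos fun _ _ => truncLog_nonpos ha

lemma antitone_truncLogSum (ha : ‖a‖ < 2) : Antitone fun N => truncLogSum N a :=
  antitone_nat_of_succ_le fun N => by
    rw [truncLogSum, Finset.sum_range_succ]
    exact add_le_of_nonpos_right (truncLog_nonpos ha)

lemma truncLogSum_le (hj : j < N) (ha : ‖a‖ < 2) (h : ‖a - pole j‖ ≤ poleRadius j) :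
    truncLogSum N a ≤ -8 := by
  rw [truncLogSum, ← Finset.add_sum_erase _ _ (Finset.mem_range.2 hj), truncLog_eq_of_le h]
  exact add_le_of_nonpos_right (Finset.sum_nonpos fun _ _ => truncLog_nonpos ha)

lemma neg_half_le_truncLogSum_zero : -(1 / 2) ≤ truncLogSum N 0 := by
  calc -(1 / 2) ≤ -(1 / 2) + (1 / 2 : ℝ) ^ (N + 1) := by
        simp only [le_add_iff_nonneg_right]; positivity
    _ ≤ truncLogSum N 0 := by
        induction N with
        | zero => simp [truncLogSum]
        | succ N ih =>
          rw [truncLogSum, Finset.sum_range_succ, ← truncLogSum]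
          linarith [neg_pow_le_truncLog_zero (j := N), pow_succ (1 / 2 : ℝ) (N + 1)]

end TruncLog

section AngularPart
variable {P : CSpace 3}

/-- The part of `twistedDomain` left when the extra room around the poles is removed, without the
bound on the third coordinate. -/
def thinSet : Set (CSpace 3) :=
  {P | ‖P 1 - twistCenter (‖P 0‖ ^ 2)‖ ^ 2 < 1 + radiusBump (‖P 0‖ ^ 2)}

lemma isOpen_thinSet : IsOpen thinSet := by
  have hz : Continuous fun P : CSpace 3 => ‖P 0‖ ^ 2 := by fun_prop
  have hb : Continuous fun P : CSpace 3 => P 1 := by fun_prop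
  exact isOpen_lt ((hb.sub (contDiff_twistCenter.continuous.comp hz)).norm.pow 2)
    (continuous_const.add (contDiff_radiusBump.continuous.comp hz))

/-- The argument of the second coordinate, relative to the centre of its fibre. -/
def relArg (P : CSpace 3) : ℝ :=
  Complex.arg (P 1 * Complex.exp (-(twistAngle (‖P 0‖ ^ 2)) * Complex.I))

/-- The branch of the argument of the second coordinate which follows the centres of the
fibres. -/
def fiberArg (P : CSpace 3) : ℝ := twistAngle (‖P 0‖ ^ 2) + relArg P

lemma re_mul_exp_neg_twistAngle_pos (hP : P ∈ thinSet) (hx : ‖P 0‖ ^ 2 ∈ Set.Icc 1 3) :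
    0 < (P 1 * Complex.exp (-(twistAngle (‖P 0‖ ^ 2)) * Complex.I)).re := by
  let e := Complex.exp (-(twistAngle (‖P 0‖ ^ 2)) * Complex.I)
  have he : ‖e‖ = 1 := by
    simpa [e] using Complex.norm_exp_ofReal_mul_I (-(twistAngle (‖P 0‖ ^ 2)))
  have hcenter : twistCenter (‖P 0‖ ^ 2) * e = 1 := by
    rw [twistCenter, ← Complex.exp_add, neg_mul, add_neg_cancel, Complex.exp_zero]
  have hthin : ‖P 1 - twistCenter (‖P 0‖ ^ 2)‖ ^ 2 < 1 + radiusBump (‖P 0‖ ^ 2) := hP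
  rw [radiusBump_eq_zero hx, add_zero, sq_lt_one_iff₀ (norm_nonneg _)] at hthin
  have hnear : ‖P 1 * e - 1‖ < 1 := by
    rwa [← hcenter, ← sub_mul, norm_mul, he, mul_one]
  have hre := (abs_lt.1 ((Complex.abs_re_le_norm _).trans_lt hnear)).1
  rw [Complex.sub_re, Complex.one_re] at hre
  linarith

lemma apply_one_ne_zero (hP : P ∈ thinSet) (hx : ‖P 0‖ ^ 2 ∈ Set.Icc 1 3) : P 1 ≠ 0 := by
  intro h0
  have h := re_mul_exp_neg_twistAngle_pos hP hx
  simp [h0] at h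

lemma abs_relArg_lt (hP : P ∈ thinSet) (hx : ‖P 0‖ ^ 2 ∈ Set.Icc 1 3) : |relArg P| < 1.58 := by
  have h := Complex.abs_arg_lt_pi_div_two_iff.2 (.inl (re_mul_exp_neg_twistAngle_pos hP hx))
  exact h.trans (by linarith [pi_lt_d2])

lemma fiberArg_lt (hP : P ∈ thinSet) (hx : ‖P 0‖ ^ 2 ∈ Set.Icc 1 3) :
    fiberArg P < 6.58 - 5 * (‖P 0‖ ^ 2 - 2) ^ 2 := by
  unfold fiberArg twistAngle
  linarith [(abs_lt.1 (abs_relArg_lt hP hx)).2]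

lemma lt_fiberArg (hP : P ∈ thinSet) (hx : ‖P 0‖ ^ 2 ∈ Set.Icc 1 3) :
    3.42 - 5 * (‖P 0‖ ^ 2 - 2) ^ 2 < fiberArg P := by
  unfold fiberArg twistAngle
  linarith [(abs_lt.1 (abs_relArg_lt hP hx)).1]

lemma fiberArg_le_nine : fiberArg P ≤ 9 := by
  have harg : relArg P ≤ π := Complex.arg_le_pi _
  have hangle : twistAngle (‖P 0‖ ^ 2) ≤ 5 := sub_le_self _ (by positivity)
  exact (add_le_add hangle (harg.trans pi_le_four)).trans_eq (by norm_num)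

lemma continuousAt_fiberArg (hP : P ∈ thinSet) (hx : ‖P 0‖ ^ 2 ∈ Set.Icc 1 3) :
    ContinuousAt fiberArg P := by
  have hangle : Continuous fun Q : CSpace 3 => twistAngle (‖Q 0‖ ^ 2) :=
    contDiff_twistAngle.continuous.comp (by fun_prop)
  have hrot : Continuous fun Q : CSpace 3 =>
      Q 1 * Complex.exp (-(twistAngle (‖Q 0‖ ^ 2)) * Complex.I) := by fun_prop
  exact hangle.continuousAt.add (ContinuousAt.comp (g := Complex.arg)
    (Complex.continuousAt_arg (.inl (re_mul_exp_neg_twistAngle_pos hP hx))) hrot.continuousAt)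

lemma coe_fiberArg (hP : P 1 ≠ 0) : (fiberArg P : Real.Angle) = Complex.arg (P 1) := by
  rw [fiberArg, relArg, Real.Angle.coe_add, Complex.arg_mul_coe_angle hP (Complex.exp_ne_zero _),
    ← Complex.ofReal_neg, Complex.arg_exp_mul_I, Real.Angle.coe_toIocMod, Real.Angle.coe_neg]
  abel

lemma isHolSupportedAt_fiberArg (hP : P ∈ thinSet) (hx : ‖P 0‖ ^ 2 ∈ Set.Icc 1 3) :
    IsHolSupportedAt fiberArg P := by
  have hcoord : Differentiable ℂ fun Q : CSpace 3 => Q 1 := by fun_prop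
  have hne := apply_one_ne_zero hP hx
  refine isHolSupportedAt_of_coe_eq_arg (continuousAt_fiberArg hP hx) (.of_forall hcoord) hne ?_
  filter_upwards [hcoord.continuous.continuousAt.eventually_ne hne] with Q hQ using coe_fiberArg hQ

/-- The function `fiberArg P - 3`, cut off outside the region `1 ≤ |z|² ≤ 3` where `fiberArg` is a
continuous branch. The gluing is plurisubharmonic on `thinSet` for `|z|² < 3`; the jump at
`|z|² = 3` does no harm in `peakFun`, since the function is at most `-1` near it. -/
def angularPart (P : CSpace 3) : ℝ :=
  if ‖P 0‖ ^ 2 ≤ 1 then 0 else if ‖P 0‖ ^ 2 ≤ 2 then max 0 (fiberArg P - 3) else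
    if ‖P 0‖ ^ 2 < 3 then fiberArg P - 3 else -10

lemma angularPart_le_six : angularPart P ≤ 6 := by
  have h := fiberArg_le_nine (P := P)
  unfold angularPart
  split_ifs
  · norm_num
  · exact max_le (by norm_num) (by linarith)
  · linarith
  · norm_num

lemma angularPart_eq_zero (hP : P ∈ thinSet) (hx : ‖P 0‖ ^ 2 < 1.1) : angularPart P = 0 := by
  unfold angularPart
  split_ifs with h1 h2 h3
  · rfl
  · have := fiberArg_lt hP ⟨(not_le.1 h1).le, by linarith⟩
    exact max_eq_left (by nlinarith)
  all_goals linarith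

lemma angularPart_eq_max (hP : P ∈ thinSet) (hx : ‖P 0‖ ^ 2 ∈ Set.Ioo 1 2.1) :
    angularPart P = max 0 (fiberArg P + -3) := by
  rw [angularPart, if_neg hx.1.not_ge]
  split_ifs with h2 h3
  · rfl
  · have := lt_fiberArg hP ⟨hx.1.le, h3.le⟩
    rw [max_eq_right (by nlinarith [hx.2]), sub_eq_add_neg]
  · linarith [hx.2]

lemma angularPart_eq_sub (hx : ‖P 0‖ ^ 2 ∈ Set.Ioo 2 3) : angularPart P = fiberArg P + -3 := by
  rw [angularPart, if_neg (by linarith [hx.1]), if_neg hx.1.not_ge, if_pos hx.2, sub_eq_add_neg]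

lemma angularPart_le_neg_one (hP : P ∈ thinSet) (hx : 2.96 < ‖P 0‖ ^ 2) : angularPart P ≤ -1 := by
  rw [angularPart, if_neg (by linarith), if_neg (by linarith)]
  split_ifs with h3
  · have := fiberArg_lt hP ⟨by linarith, h3.le⟩
    nlinarith
  · norm_num

lemma eventually_norm_zero_sq_mem_Ioo {s t : ℝ} (hs : s < ‖P 0‖ ^ 2) (ht : ‖P 0‖ ^ 2 < t) :
    ∀ᶠ Q : CSpace 3 in 𝓝 P, ‖Q 0‖ ^ 2 ∈ Set.Ioo s t :=
  (by fun_prop : Continuous fun Q : CSpace 3 => ‖Q 0‖ ^ 2).continuousAt (Ioo_mem_nhds hs ht)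

lemma isHolSupportedAt_angularPart (hP : P ∈ thinSet) (hx : ‖P 0‖ ^ 2 < 3) :
    IsHolSupportedAt angularPart P := by
  have hthin : ∀ᶠ Q in 𝓝 P, Q ∈ thinSet := isOpen_thinSet.mem_nhds hP
  rcases lt_or_ge (‖P 0‖ ^ 2) 1.1 with h1 | h1
  · refine (IsHolSupportedAt.const 0).congr ?_
    have hneg : -1 < ‖P 0‖ ^ 2 := neg_one_lt_zero.trans_le (by positivity)
    filter_upwards [hthin, eventually_norm_zero_sq_mem_Ioo hneg h1] with Q hQ hQx using
      (angularPart_eq_zero hQ hQx.2).symm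
  have harg : IsHolSupportedAt (fun Q => fiberArg Q + -3) P :=
    (isHolSupportedAt_fiberArg hP ⟨by linarith, hx.le⟩).add (.const (-3))
  rcases lt_or_ge (‖P 0‖ ^ 2) 2.1 with h2 | h2
  · refine ((IsHolSupportedAt.const 0).max harg).congr ?_
    filter_upwards [hthin, eventually_norm_zero_sq_mem_Ioo (s := 1) (by linarith) h2]
      with Q hQ hQx using (angularPart_eq_max hQ hQx).symm
  · refine harg.congr ?_
    filter_upwards [eventually_norm_zero_sq_mem_Ioo (s := 2) (by linarith) hx] with Q hQx using
      (angularPart_eq_sub hQx).symm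

end AngularPart

section PeakFun
variable {P : CSpace 3} {N j : ℕ}

/-- A decreasing sequence of functions on `twistedDomain`, whose limit is plurisubharmonic. Where
the extra room around `pole j` opens up, the logarithms outweigh `angularPart`, and `peakFun N`
vanishes for `j < N`. -/
def peakFun (N : ℕ) (P : CSpace 3) : ℝ := max 0 (truncLogSum N (P 2) + 1 + angularPart P)

lemma peakFun_nonneg : 0 ≤ peakFun N P := le_max_left _ _

lemma antitone_peakFun (hP : P ∈ twistedDomain) : Antitone fun N => peakFun N P := fun _ _ h =>
  max_le_max_left _ (by
    gcongr
    exact antitone_truncLogSum (norm_two_lt_of_mem_twistedDomain hP) h)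

lemma peakFun_eq_zero (hj : j < N) (ha : ‖P 2‖ < 2) (h : ‖P 2 - pole j‖ < poleRadius j) :
    peakFun N P = 0 :=
  max_eq_left (by linarith [truncLogSum_le hj ha h.le, angularPart_le_six (P := P)])

lemma isOpen_norm_two_lt : IsOpen {Q : CSpace 3 | ‖Q 2‖ < 2} :=
  isOpen_lt (by fun_prop) continuous_const

lemma isHolSupportedAt_peakFun_of_mem_thinSet (hP : P ∈ thinSet) (ha : ‖P 2‖ < 2) :
    IsHolSupportedAt (peakFun N) P := by
  rcases lt_or_ge (‖P 0‖ ^ 2) 3 with hx | hx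
  · have hsum : IsHolSupportedAt (fun Q : CSpace 3 => truncLogSum N (Q 2)) P :=
      isHolSupportedAt_truncLogSum.comp (φ := fun Q : CSpace 3 => Q 2) (by fun_prop)
    exact (IsHolSupportedAt.const 0).max
      ((hsum.add (.const 1)).add (isHolSupportedAt_angularPart hP hx))
  · refine (IsHolSupportedAt.const 0).congr ?_
    filter_upwards [isOpen_thinSet.mem_nhds hP, isOpen_norm_two_lt.mem_nhds ha,
      eventually_norm_zero_sq_mem_Ioo (s := 2.96) (by linarith) (lt_add_one _)] with Q hQ hQa hQx
    exact (max_eq_left (by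
      linarith [truncLogSum_nonpos (N := N) hQa, angularPart_le_neg_one hQ hQx.1])).symm

lemma mem_thinSet_or_exists_near_pole (hP : P ∈ twistedDomain) :
    P ∈ thinSet ∨ ∃ j, ‖P 2 - pole j‖ < poleRadius j := by
  refine or_iff_not_imp_left.2 fun hthin => ?_
  have hge : 1 + radiusBump (‖P 0‖ ^ 2) ≤ ‖P 1 - twistCenter (‖P 0‖ ^ 2)‖ ^ 2 := not_lt.1 hthin
  have hroom : 0 < roomFun (P 2) := by
    linarith [mem_twistedDomain.1 hP, heightBarrier_nonneg (x := ‖P 2‖ ^ 2)]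
  exact (roomFun_pos_iff.1 hroom).2

lemma eventually_isHolSupportedAt_peakFun (hP : P ∈ twistedDomain) :
    ∀ᶠ p in atTop ×ˢ 𝓝 P, IsHolSupportedAt (peakFun p.1) p.2 := by
  have hlt : ∀ᶠ Q : CSpace 3 in 𝓝 P, ‖Q 2‖ < 2 :=
    isOpen_norm_two_lt.mem_nhds (norm_two_lt_of_mem_twistedDomain hP)
  rcases mem_thinSet_or_exists_near_pole hP with hthin | ⟨j, hj⟩
  · filter_upwards [(eventually_true _).prod_mk (hlt.and (isOpen_thinSet.mem_nhds hthin))]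
      with p hp using isHolSupportedAt_peakFun_of_mem_thinSet hp.2.2 hp.2.1
  · have hnear : ∀ᶠ Q : CSpace 3 in 𝓝 P, ‖Q 2 - pole j‖ < poleRadius j :=
      (isOpen_lt (f := fun Q : CSpace 3 => ‖Q 2 - pole j‖) (by fun_prop) continuous_const).mem_nhds
        hj
    filter_upwards [(eventually_gt_atTop j).prod_mk (hlt.and hnear).eventually_nhds]
      with p hp
    refine (IsHolSupportedAt.const 0).congr ?_
    filter_upwards [hp.2] with Q hQ using (peakFun_eq_zero hp.1 hQ.1 hQ.2).symm

lemma isPSHOn_iInf_peakFun :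
    IsPSHOn twistedDomain fun P => ((⨅ N, peakFun N P : ℝ) : EReal) :=
  isPSHOn_iInf (fun _ => antitone_peakFun) (fun _ _ _ => peakFun_nonneg)
    fun _ => eventually_isHolSupportedAt_peakFun

lemma half_le_iInf_peakFun_zero : 1 / 2 ≤ ⨅ N, peakFun N 0 := by
  refine le_ciInf fun N => le_max_of_le_right ?_
  have hang : angularPart 0 = 0 := by simp [angularPart]
  rw [hang, PiLp.zero_apply]
  linarith [neg_half_le_truncLogSum_zero (N := N)]

lemma iInf_peakFun_nonpos (h0 : ‖P 0‖ = 2) : ⨅ N, peakFun N P ≤ 0 := by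
  refine (ciInf_le ⟨0, by rintro _ ⟨N, rfl⟩; exact peakFun_nonneg⟩ 0).trans (max_le le_rfl ?_)
  have hang : angularPart P = -10 := by
    rw [angularPart, h0]
    norm_num
  norm_num [hang, truncLogSum]

lemma mk_zero_pole_mem_twistedDomain {z : ℂ} (hz : ‖z‖ ≤ 2) :
    !₂[z, 0, (pole j : ℂ)] ∈ twistedDomain := by
  have hpole := pole_le_half (j := j)
  have hroom : 0 < roomFun (pole j) := roomFun_pos_iff.2
    ⟨by rw [norm_pole]; linarith, j, by simpa using poleRadius_pos⟩
  have hbump : 0 ≤ radiusBump (‖z‖ ^ 2) := radiusBump_nonneg (by nlinarith [norm_nonneg z])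
  rw [mk_mem_twistedDomain, zero_sub, norm_neg, norm_twistCenter,
    heightBarrier_eq_zero (pow_le_one₀ (norm_nonneg _) (by rw [norm_pole]; linarith))]
  linarith

lemma mk_zero_zero_mem_twistedDomain {z : ℂ} (hz : 0 < radiusBump (‖z‖ ^ 2)) :
    !₂[z, 0, 0] ∈ twistedDomain := by
  rw [mk_mem_twistedDomain, zero_sub, norm_neg, norm_twistCenter,
    heightBarrier_eq_zero (by norm_num)]
  linarith [(roomFun_mem_Icc (a := 0)).1]

lemma not_isSDomain_twistedDomain : ¬ IsSDomain twistedDomain := by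
  have hglue : 0 < expNegInvGlue 1 := expNegInvGlue.pos_of_pos one_pos
  have horigin : (0 : CSpace 3) = !₂[0, 0, 0] := by ext i; fin_cases i <;> rfl
  have hpoles : Tendsto (fun j => (!₂[0, 0, (pole j : ℂ)] : CSpace 3)) atTop (𝓝 0) := by
    have hcont : Continuous fun t : ℝ => (!₂[0, 0, (t : ℂ)] : CSpace 3) := by fun_prop
    rw [horigin]
    exact (hcont.tendsto' 0 _ (by simp)).comp tendsto_pole
  refine not_isSDomain_of_disc_limit (b := !₂[2, 0, 0]) (c := 1 / 4) isPSHOn_iInf_peakFun ?_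
    (by linarith [half_le_iInf_peakFun_zero]) hpoles ?_ ?_
  · rw [horigin]
    refine mk_zero_zero_mem_twistedDomain ?_
    rw [radiusBump_of_le_three (by norm_num)]
    simpa using hglue
  · intro j
    refine closedDisc_subset_iff.2 fun l hl => ?_
    have hpoint : !₂[0, 0, (pole j : ℂ)] + l • !₂[2, 0, 0] = !₂[l * 2, 0, (pole j : ℂ)] := by
      ext i; fin_cases i <;> simp
    rw [hpoint]
    exact mk_zero_pole_mem_twistedDomain (by rw [norm_mul, Complex.norm_two]; linarith)
  · intro l hl
    rw [mem_sphere_zero_iff_norm] at hl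
    have hpoint : (0 : CSpace 3) + l • !₂[2, 0, 0] = !₂[l * 2, 0, 0] := by
      ext i; fin_cases i <;> simp
    have hnorm : ‖l * 2‖ = 2 := by rw [norm_mul, hl, Complex.norm_two, one_mul]
    rw [hpoint]
    refine ⟨mk_zero_zero_mem_twistedDomain ?_, (iInf_peakFun_nonpos hnorm).trans_lt (by norm_num)⟩
    rw [hnorm, radiusBump_of_one_le (by norm_num)]
    norm_num [hglue]

end PeakFun

/-- **Corollary (Theorem 4).** Being an `𝒮`-domain is not a local property of the
boundary: there are `n ≥ 2` and a bounded domain `D ⊆ ℂⁿ` with smooth boundary which is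
not an `𝒮`-domain, although every boundary point has an open neighbourhood `U` with
`D ∩ U` an `𝒮`-domain. -/
theorem sdomain_not_local : ∃ (n : ℕ), 2 ≤ n ∧
    ∃ D : Set (EuclideanSpace ℂ (Fin n)),
      IsOpen D ∧ IsConnected D ∧ Bornology.IsBounded D ∧ HasSmoothBoundary D ∧
      ¬ IsSDomain D ∧
      ∀ P ∈ frontier D, ∃ U : Set (EuclideanSpace ℂ (Fin n)),
        IsOpen U ∧ P ∈ U ∧ IsSDomain (D ∩ U) :=
  ⟨3, by norm_num, twistedDomain, isOpen_twistedDomain, isConnected_twistedDomain,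
    isBounded_twistedDomain, hasSmoothBoundary_twistedDomain, not_isSDomain_twistedDomain,
    fun _ hP => exists_isSDomain_twistedDomain_inter hP⟩
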